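/- For every set S of 10 distinct points in the Euclidean plane ℝ², there exists a subset T ⊆ S with |T| = 4 such that for all pairwise distinct points A, B, C ∈ T, the angle ∠ABC satisfies |∠ABC − 90°| ≥ 4°. -/

import Mathlib

open EuclideanGeometry Real

/-!
Order the ten points by their heights over a rotating line. If two directions, at least `π / 2 + w`
and less than `π` apart, order four points in the same way, then no line through two of the four is
parallel to a direction between them, and hence no angle between two of these lines is within `w` of
`π / 2`. Suppose that no four points are so ordered, for `w` just below four degrees. Then the
common part of the two orders has no chain of length four.

Of the directions modulo `π / 2` of the `45` lines through two points, an arc of length `w < π / 45`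
contains less than two on average; so some such arc contains at most one. If the order of the points
does not change in any of the four copies of this narrow arc, two points which are not ordered alike
at the beginning of one copy and at the end of the next are ordered alike at the beginning of that
next copy and at the end of the one after it. This gives two relations without chains of length four
that together compare any two points, so there are at most `3 * 3` points. Hence in some copy two
neighbours in the order, with `i` points below them, change places, and by the symmetry under a half
turn we may assume `i ≤ 4`. Cutting each quarter turn into the narrow arc and thirteen equal ones
leaves finitely many orders to consider, and a search that deduces the order of more and more pairs
refutes these five cases.
-/

/-! ### Chains -/

section Chains

variable {ι κ : Type*}

/-- The largest `k ≤ n` such that some chain of length `k` starts at `x`. -/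
noncomputable def rank (r : ι → ι → Prop) (n : ℕ) (x : ι) : ℕ :=
  open scoped Classical in Nat.findGreatest (fun k => ∃ l, (x :: l).IsChain r ∧ l.length + 1 = k) n

theorem rank_lt_rank {r : ι → ι → Prop} {n : ℕ} (hr : ∀ l : List ι, l.IsChain r → l.length ≤ n)
    {x y : ι} (hxy : r x y) : rank r n y < rank r n x := by
  classical
  have h₁ : 1 ≤ n := hr [x] (by simp)
  obtain ⟨l, hl, hlen⟩ : ∃ l, (y :: l).IsChain r ∧ l.length + 1 = rank r n y :=
    Nat.findGreatest_spec (P := fun k => ∃ l, (y :: l).IsChain r ∧ l.length + 1 = k) h₁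
      ⟨[], by simp, rfl⟩
  have hl' : (x :: y :: l).IsChain r := List.isChain_cons_cons.2 ⟨hxy, hl⟩
  rw [← hlen, Nat.lt_iff_add_one_le]
  exact Nat.le_findGreatest (hr _ hl') ⟨y :: l, hl', rfl⟩

theorem rank_mem_Icc {r : ι → ι → Prop} {n : ℕ} (hr : ∀ l : List ι, l.IsChain r → l.length ≤ n)
    (x : ι) : rank r n x ∈ Finset.Icc 1 n := by
  classical
  have h₁ : 1 ≤ n := hr [x] (by simp)
  exact Finset.mem_Icc.2 ⟨Nat.le_findGreatest h₁ ⟨[], by simp, rfl⟩, Nat.findGreatest_le n⟩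

theorem exists_isChain_of_pow_lt_card [Fintype κ] [Fintype ι] (R : κ → ι → ι → Prop) {n : ℕ}
    (hn : n ^ Fintype.card κ < Fintype.card ι)
    (hR : ∀ x y, x ≠ y → ∃ b, R b x y ∨ R b y x) :
    ∃ b, ∃ l : List ι, l.IsChain (R b) ∧ n < l.length := by
  classical
  by_contra! h
  let ranks (x : ι) (b : κ) : Finset.Icc 1 n := ⟨rank (R b) n x, rank_mem_Icc (h b) x⟩
  obtain ⟨x, y, hxy, heq⟩ := Fintype.exists_ne_map_eq_of_card_lt ranks (by simpa using hn)
  obtain ⟨b, hb⟩ := hR x y hxy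
  have heq : rank (R b) n x = rank (R b) n y := congrArg (fun r => (r b : ℕ)) heq
  rcases hb with hb | hb
  · exact (rank_lt_rank (h b) hb).ne' heq
  · exact (rank_lt_rank (h b) hb).ne heq

theorem exists_finset_of_isChain {r : ι → ι → Prop} [IsStrictOrder ι r] {l : List ι}
    (hl : l.IsChain r) :
    ∃ T : Finset ι, T.card = l.length ∧ ∀ x ∈ T, ∀ y ∈ T, x ≠ y → r x y ∨ r y x := by
  classical
  have hl' := List.isChain_iff_pairwise.1 hl
  refine ⟨l.toFinset, List.toFinset_card_of_nodup (hl'.imp fun h => ne_of_irrefl h), ?_⟩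
  simp only [List.mem_toFinset]
  have : Std.Symm fun x y => r x y ∨ r y x := ⟨fun _ _ => Or.symm⟩
  exact fun x hx y hy hxy => (hl'.imp (S := fun x y => r x y ∨ r y x) Or.inl).forall hx hy hxy

theorem exists_strictMono_comp_equiv [Fintype ι] {n : ℕ} (hι : Fintype.card ι = n) {g : ι → ℝ}
    (hg : Function.Injective g) : ∃ σ : Fin n ≃ ι, StrictMono (g ∘ σ) := by
  let e := (Fintype.equivFinOfCardEq hι).symm
  refine ⟨(Tuple.sort (g ∘ e)).trans e, (Tuple.monotone_sort (g ∘ e)).strictMono_of_injective ?_⟩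
  exact hg.comp (e.injective.comp (Equiv.injective _))

end Chains

/-! ### Sweeps -/

section Sweep

variable {ι : Type*} {f : ℕ → ι → ℝ} {s t u : ℕ} {x y : ι}

/-- `x` lies below `y` at the times `s` and `s + 15`. -/
def Link (f : ℕ → ι → ℝ) (s : ℕ) (x y : ι) : Prop :=
  f s x < f s y ∧ f (s + 15) x < f (s + 15) y

instance isStrictOrder_link (f : ℕ → ι → ℝ) (s : ℕ) : IsStrictOrder ι (Link f s) where
  irrefl _ h := h.1.false
  trans _ _ _ h h' := ⟨h.1.trans h'.1, h.2.trans h'.2⟩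

/-- `x` lies below `y` at the time `s`, and above `y` at the time `s + 1`. -/
def Swap (f : ℕ → ι → ℝ) (s : ℕ) (x y : ι) : Prop :=
  f s x < f s y ∧ f (s + 1) y < f (s + 1) x

/-- What the proof uses of the heights `f s x` of points `x` in the directions number `s`, when no
four points have all their angles far from `π / 2`. A half turn takes `28` steps, and `15` steps
turn by more than `π / 2`, which is why a chain of links of length four would be such a quadruple.
In the steps from `14 * k` to `14 * k + 1`, for all `k` together, at most one pair of points changes
its order, and it does so for only one parity of `k`. -/
structure Sweep (f : ℕ → ι → ℝ) : Prop where
  injective : ∀ s, Function.Injective (f s)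
  half_turn : ∀ s x, f (s + 28) x = -f s x
  swap_once : ∀ {s t u x y}, s ≤ t → t ≤ u → u ≤ s + 28 →
    f s x < f s y → f t y < f t x → f u y < f u x
  narrow : ∀ {k l x y z u}, Swap f (14 * k) x y → Swap f (14 * l) z u →
    s(x, y) = s(z, u) ∧ k % 2 = l % 2
  no_chain : ∀ s (l : List ι), l.IsChain (Link f s) → l.length ≤ 3

namespace Sweep

theorem lt_half_turn (hf : Sweep f) : f (s + 28) x < f (s + 28) y ↔ f s y < f s x := by
  rw [hf.half_turn, hf.half_turn, neg_lt_neg_iff]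

theorem lt_full_turn (hf : Sweep f) : f (s + 56) x < f (s + 56) y ↔ f s x < f s y :=
  hf.lt_half_turn.trans hf.lt_half_turn

theorem periodic_lt (hf : Sweep f) : Function.Periodic (fun s x y => f s x < f s y) 56 := by
  intro s
  ext x y
  exact hf.lt_full_turn

theorem link_half_turn (hf : Sweep f) : Link f (s + 28) x y ↔ Link f s y x := by
  rw [Link, Link, hf.lt_half_turn, show s + 28 + 15 = s + 15 + 28 by omega, hf.lt_half_turn]

theorem periodic_link (hf : Sweep f) : Function.Periodic (Link f) 56 := by
  intro s
  ext x y
  exact hf.link_half_turn.trans hf.link_half_turn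

theorem lt_or_lt (hf : Sweep f) (s : ℕ) (h : x ≠ y) : f s x < f s y ∨ f s y < f s x :=
  ((hf.injective s).ne h).lt_or_gt

theorem not_chain (hf : Sweep f) {a b c d : ι} (hab : Link f s a b) (hbc : Link f s b c)
    (hcd : Link f s c d) : False := by
  simpa using hf.no_chain s [a, b, c, d] (by simp [hab, hbc, hcd])

theorem lt_of_not_link_of_lt (hf : Sweep f) (hxy : ¬ Link f s x y) (h : f s x < f s y) :
    f (s + 43) x < f (s + 43) y :=
  hf.lt_half_turn.2 ((hf.lt_or_lt _ (ne_of_apply_ne _ h.ne)).resolve_left fun h' => hxy ⟨h, h'⟩)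

theorem lt_of_not_link_of_lt_add (hf : Sweep f) (hxy : ¬ Link f s x y)
    (h : f (s + 15) x < f (s + 15) y) : f (s + 28) x < f (s + 28) y :=
  hf.lt_half_turn.2 ((hf.lt_or_lt _ (ne_of_apply_ne _ h.ne)).resolve_left fun h' => hxy ⟨h', h⟩)

theorem lt_of_lt_of_lt (hf : Sweep f) (hst : s ≤ t) (htu : t ≤ u) (hus : u ≤ s + 28)
    (hs : f s x < f s y) (hu : f u x < f u y) : f t x < f t y :=
  (hf.lt_or_lt t (ne_of_apply_ne _ hs.ne)).resolve_right fun ht =>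
    hu.not_gt (hf.swap_once hst htu hus hs ht)

theorem lt_succ (hf : Sweep f) (h : f s x < f s y) (hxy : ¬ Swap f s x y) :
    f (s + 1) x < f (s + 1) y :=
  (hf.lt_or_lt _ (ne_of_apply_ne _ h.ne)).resolve_right fun h' => hxy ⟨h, h'⟩

theorem lt_of_lt_succ (hf : Sweep f) (h : f (s + 1) x < f (s + 1) y) (hyx : ¬ Swap f s y x) :
    f s x < f s y :=
  (hf.lt_or_lt _ (ne_of_apply_ne _ h.ne)).resolve_right fun h' => hyx ⟨h', h⟩

theorem not_swap_of_odd (hf : Sweep f) {a b : ι} (h : Swap f 0 a b) {k : ℕ} (hk : k % 2 = 1) :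
    ¬ Swap f (14 * k) x y := by
  intro hxy
  have := (hf.narrow (k := 0) h hxy).2
  omega

theorem val_add_one_eq_of_swap {n : ℕ} {f : ℕ → Fin n → ℝ} (hf : Sweep f) (h₀ : StrictMono (f 0))
    {i j : Fin n} (h : Swap f 0 i j) : (i : ℕ) + 1 = j := by
  have hij : i < j := h₀.lt_iff_lt.1 h.1
  by_contra hne
  obtain ⟨k, hik, hkj⟩ : ∃ k, i < k ∧ k < j :=
    ⟨⟨i + 1, by omega⟩, Fin.lt_def.2 (by simp), Fin.lt_def.2 (by simp; omega)⟩
  have hnot : ∀ {a b}, s(a, b) ≠ s(i, j) → ¬ Swap f 0 a b := fun hab hs =>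
    hab (hf.narrow (k := 0) (l := 0) hs h).1
  refine h.2.not_gt ((hf.lt_succ (h₀ hik) (hnot ?_)).trans (hf.lt_succ (h₀ hkj) (hnot ?_)))
  · simp [hkj.ne, hij.ne]
  · simp [hik.ne', hkj.ne]

theorem lt_one_of_swap {n : ℕ} {f : ℕ → Fin n → ℝ} (hf : Sweep f) (h₀ : StrictMono (f 0))
    {i j : Fin n} (h : Swap f 0 i j) {x y : Fin n} (hxy : Equiv.swap i j x < Equiv.swap i j y) :
    f 1 x < f 1 y := by
  have hij := hf.val_add_one_eq_of_swap h₀ h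
  have hne : x ≠ y := fun hxy' => hxy.ne (congrArg _ hxy')
  rcases hne.lt_or_gt with hlt | hlt
  · refine hf.lt_succ (h₀ hlt) fun hs => ?_
    have := (hf.narrow (k := 0) (l := 0) hs h).1
    rw [Sym2.eq_iff] at this
    obtain ⟨rfl, rfl⟩ | ⟨rfl, rfl⟩ := this
    · rw [Equiv.swap_apply_left, Equiv.swap_apply_right] at hxy
      exact hxy.not_gt hlt
    · omega
  · obtain ⟨rfl, rfl⟩ : y = i ∧ x = j := by
      rw [Equiv.swap_apply_def, Equiv.swap_apply_def] at hxy
      split_ifs at hxy <;> omega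
    exact h.2

end Sweep

end Sweep

/-! ### Relations as bit matrices -/

namespace BitMatrix

variable {p q : ℕ → Fin 10 → Fin 10 → Prop} {H K i j k n b : ℕ} {f : ℕ → ℕ}

/-- The number `H` is read as a sequence of `10 × 10` bit matrices: its bit `100 * s + 10 * x + y`
stands for the entry `(x, y)` of the matrix number `s`. This says that every set entry of `H` is
a true instance of `p`, so that `H` records partial knowledge of `p`. -/
def AllBits (p : ℕ → Fin 10 → Fin 10 → Prop) (H : ℕ) : Prop :=
  ∀ j, H.testBit j → p (j / 100) (Fin.ofNat 10 (j / 10)) (Fin.ofNat 10 j)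

/- The bit operations are called by their own names because the kernel evaluates these on literals
in one step, whereas it would have to unfold the instances behind `|||`, `&&&`, `<<<` and `>>>` at
every use. -/
theorem testBit_lor : (H.lor K).testBit j ↔ H.testBit j ∨ K.testBit j := by
  rw [show H.lor K = H ||| K from rfl, Nat.testBit_or, Bool.or_eq_true]

theorem testBit_land : (H.land K).testBit j ↔ H.testBit j ∧ K.testBit j := by
  rw [show H.land K = H &&& K from rfl, Nat.testBit_and, Bool.and_eq_true]

theorem testBit_shiftLeft : (H.shiftLeft k).testBit j ↔ k ≤ j ∧ H.testBit (j - k) := by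
  rw [show H.shiftLeft k = H <<< k from rfl, Nat.testBit_shiftLeft, Bool.and_eq_true,
    decide_eq_true_eq]

theorem testBit_shiftRight : (H.shiftRight k).testBit j ↔ H.testBit (k + j) := by
  rw [show H.shiftRight k = H >>> k from rfl, Nat.testBit_shiftRight]

theorem testBit_one_shiftLeft (h : (Nat.shiftLeft 1 k).testBit j) : j = k := by
  obtain ⟨hkj, hj⟩ := testBit_shiftLeft.1 h
  have := Nat.testBit_one_eq_true_iff_self_eq_zero.1 hj
  omega

theorem AllBits.mono (h : AllBits p H) (hpq : ∀ s x y, p s x y → q s x y) : AllBits q H :=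
  fun j hj => hpq _ _ _ (h j hj)

protected theorem AllBits.lor (hH : AllBits p H) (hK : AllBits p K) : AllBits p (H.lor K) :=
  fun j hj => (testBit_lor.1 hj).elim (hH j) (hK j)

protected theorem AllBits.land (hH : AllBits p H) (hK : AllBits q K) :
    AllBits (fun s x y => p s x y ∧ q s x y) (H.land K) :=
  fun j hj => ⟨hH j (testBit_land.1 hj).1, hK j (testBit_land.1 hj).2⟩

protected theorem AllBits.shiftLeft (h : AllBits p H) :
    AllBits (fun s x y => k ≤ s ∧ p (s - k) x y) (H.shiftLeft (100 * k)) := by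
  intro j hj
  obtain ⟨hkj, hj⟩ := testBit_shiftLeft.1 hj
  have hp := h _ hj
  rw [show (j - 100 * k) / 100 = j / 100 - k by omega,
    show Fin.ofNat 10 ((j - 100 * k) / 10) = Fin.ofNat 10 (j / 10) by ext; simp; omega,
    show Fin.ofNat 10 (j - 100 * k) = Fin.ofNat 10 j by ext; simp; omega] at hp
  exact ⟨by omega, hp⟩

protected theorem AllBits.shiftRight (h : AllBits p H) :
    AllBits (fun s x y => p (s + k) x y) (H.shiftRight (100 * k)) := by
  intro j hj
  have hp := h _ (testBit_shiftRight.1 hj)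
  rwa [show (100 * k + j) / 100 = j / 100 + k by omega,
    show Fin.ofNat 10 ((100 * k + j) / 10) = Fin.ofNat 10 (j / 10) by ext; simp; omega,
    show Fin.ofNat 10 (100 * k + j) = Fin.ofNat 10 j by ext; simp; omega] at hp

theorem AllBits.mod_two_pow (h : AllBits p H) : AllBits p (H % 2 ^ n) := by
  intro j hj
  rw [Nat.testBit_mod_two_pow, Bool.and_eq_true] at hj
  exact h j hj.2

/-- The matrices of `H` rotated by `k` places, `H` being thought of as a cycle of length `56`. -/
def rotate (k H : ℕ) : ℕ :=
  (H.shiftRight (100 * k)).lor (H.shiftLeft (100 * (56 - k))) % 2 ^ 5600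

protected theorem AllBits.rotate (hp : Function.Periodic p 56) (hk : k ≤ 56) (h : AllBits p H) :
    AllBits (fun s x y => p (s + k) x y) (rotate k H) := by
  suffices AllBits (fun s x y => p (s + k) x y)
      ((H.shiftRight (100 * k)).lor (H.shiftLeft (100 * (56 - k)))) from this.mod_two_pow
  refine h.shiftRight.lor (h.shiftLeft.mono fun s x y ⟨_, hxy⟩ => ?_)
  rwa [← hp (s - (56 - k)), show s - (56 - k) + 56 = s + k by omega] at hxy

/-- The numbers `f 0, …, f (n - 1)` side by side, in blocks of `b` bits. -/
def pack (b : ℕ) (f : ℕ → ℕ) : ℕ → ℕ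
  | 0 => 0
  | n + 1 => (pack b f n).lor ((f n).shiftLeft (b * n))

theorem exists_of_testBit_pack (h : (pack b f n).testBit j) :
    ∃ i < n, b * i ≤ j ∧ (f i).testBit (j - b * i) := by
  induction n with
  | zero => simp [pack] at h
  | succ n ih =>
    rcases testBit_lor.1 h with h | h
    · obtain ⟨i, hi, hij⟩ := ih h
      exact ⟨i, by omega, hij⟩
    · exact ⟨n, by omega, testBit_shiftLeft.1 h⟩

/-- The same `10 × 10` matrix `r` at the times `0, …, n - 1`. -/
def stack (n : ℕ) (r : ℕ → ℕ → Bool) : ℕ :=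
  pack 100 (fun _ => pack 10 (fun x => pack 1 (fun y => (r x y).toNat) 10) 10) n

protected theorem AllBits.stack {r : ℕ → ℕ → Bool} :
    AllBits (fun s x y => s < n ∧ r x y) (stack n r) := by
  intro j hj
  obtain ⟨s, hs, hsj, h⟩ := exists_of_testBit_pack hj
  obtain ⟨x, hx, hxj, h⟩ := exists_of_testBit_pack h
  obtain ⟨y, hy, hyj, h⟩ := exists_of_testBit_pack h
  have hr : r x y ∧ j - 100 * s - 10 * x - 1 * y = 0 := by
    cases hr : r x y <;> simp_all [Nat.testBit_one_eq_true_iff_self_eq_zero]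
  rw [Fin.val_ofNat, Fin.val_ofNat, show j / 10 % 10 = x by omega, show j % 10 = y by omega]
  exact ⟨by omega, hr.1⟩

/-- The union of `H` and its shift to the left by `b`. -/
def orLeft (b H : ℕ) : ℕ := H.lor (H.shiftLeft b)

/-- The union of `H` and its shift to the right by `b`. -/
def orRight (b H : ℕ) : ℕ := H.lor (H.shiftRight b)

/-- The union of the ten shifts of `H` to the left by `0, b, …, 9 * b`. -/
def spreadLeft (b H : ℕ) : ℕ :=
  orLeft (2 * b) (orLeft (4 * b) (orLeft (2 * b) (orLeft (1 * b) H)))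

/-- The union of the ten shifts of `H` to the right by `0, b, …, 9 * b`. -/
def spreadRight (b H : ℕ) : ℕ :=
  orRight (2 * b) (orRight (4 * b) (orRight (2 * b) (orRight (1 * b) H)))

theorem exists_of_testBit_orLeft
    (h : ∀ j, K.testBit j → ∃ z ≤ n, z * b ≤ j ∧ H.testBit (j - z * b)) :
    ∀ j, (orLeft (k * b) K).testBit j → ∃ z ≤ n + k, z * b ≤ j ∧ H.testBit (j - z * b) := by
  intro j hj
  rcases testBit_lor.1 hj with hj | hj
  · obtain ⟨z, hz, hzj⟩ := h j hj
    exact ⟨z, by omega, hzj⟩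
  · obtain ⟨hkj, hj⟩ := testBit_shiftLeft.1 hj
    obtain ⟨z, hz, hzj, hj⟩ := h _ hj
    rw [Nat.sub_sub, ← add_mul, add_comm k] at hj
    exact ⟨z + k, by omega, by rw [add_mul]; omega, hj⟩

theorem exists_of_testBit_orRight
    (h : ∀ j, K.testBit j → ∃ z ≤ n, H.testBit (j + z * b)) :
    ∀ j, (orRight (k * b) K).testBit j → ∃ z ≤ n + k, H.testBit (j + z * b) := by
  intro j hj
  rcases testBit_lor.1 hj with hj | hj
  · obtain ⟨z, hz, hzj⟩ := h j hj
    exact ⟨z, by omega, hzj⟩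
  · obtain ⟨z, hz, hj⟩ := h _ (testBit_shiftRight.1 hj)
    rw [add_comm (k * b), add_assoc, ← add_mul, add_comm k] at hj
    exact ⟨z + k, by omega, hj⟩

theorem exists_of_testBit_spreadLeft (h : (spreadLeft b H).testBit j) :
    ∃ z ≤ 9, z * b ≤ j ∧ H.testBit (j - z * b) := by
  have h₀ : ∀ j, H.testBit j → ∃ z ≤ 0, z * b ≤ j ∧ H.testBit (j - z * b) :=
    fun j hj => ⟨0, le_rfl, by simp, by simpa using hj⟩
  exact exists_of_testBit_orLeft (exists_of_testBit_orLeft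
    (exists_of_testBit_orLeft (exists_of_testBit_orLeft h₀))) j h

theorem exists_of_testBit_spreadRight (h : (spreadRight b H).testBit j) :
    ∃ z ≤ 9, H.testBit (j + z * b) := by
  have h₀ : ∀ j, H.testBit j → ∃ z ≤ 0, H.testBit (j + z * b) :=
    fun j hj => ⟨0, le_rfl, by simpa using hj⟩
  exact exists_of_testBit_orRight (exists_of_testBit_orRight
    (exists_of_testBit_orRight (exists_of_testBit_orRight h₀))) j h

/-- The entries `(x, 0)` at all times. -/
def firstColumn : ℕ := stack 56 fun _ y => y = 0

/-- The entries `(0, y)` at all times. -/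
def firstRow : ℕ := stack 56 fun x _ => x = 0

/-- Every column of `H` replaced by its first column. -/
def expandColumn (H : ℕ) : ℕ := spreadLeft 1 (H.land firstColumn)

/-- Every row of `H` replaced by its first row. -/
def expandRow (H : ℕ) : ℕ := spreadLeft 10 (H.land firstRow)

theorem testBit_of_testBit_expandColumn (h : (expandColumn H).testBit j) :
    H.testBit (10 * (j / 10)) := by
  obtain ⟨z, hz, hzj, h⟩ := exists_of_testBit_spreadLeft h
  obtain ⟨h, hcol⟩ := testBit_land.1 h
  have hy := of_decide_eq_true (AllBits.stack _ hcol).2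
  simp only [Fin.val_ofNat] at hy
  rwa [show 10 * (j / 10) = j - z * 1 by omega]

theorem testBit_of_testBit_expandRow (h : (expandRow H).testBit j) :
    H.testBit (100 * (j / 100) + j % 10) := by
  obtain ⟨z, hz, hzj, h⟩ := exists_of_testBit_spreadLeft h
  obtain ⟨h, hrow⟩ := testBit_land.1 h
  have hx := of_decide_eq_true (AllBits.stack _ hrow).2
  simp only [Fin.val_ofNat] at hx
  rwa [show 100 * (j / 100) + j % 10 = j - z * 10 by omega]

theorem AllBits.expandColumn_shiftRight (y : Fin 10) (h : AllBits p H) :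
    AllBits (fun s x _ => p s x y) (expandColumn (H.shiftRight y)) := by
  intro j hj
  have hp := h _ (testBit_shiftRight.1 (testBit_of_testBit_expandColumn hj))
  rwa [show (y + 10 * (j / 10)) / 100 = j / 100 by omega,
    show Fin.ofNat 10 ((y + 10 * (j / 10)) / 10) = Fin.ofNat 10 (j / 10) by ext; simp; omega,
    show Fin.ofNat 10 (y + 10 * (j / 10)) = y by ext; simp] at hp

theorem AllBits.expandRow_shiftRight (x : Fin 10) (h : AllBits p H) :
    AllBits (fun s _ y => p s x y) (expandRow (H.shiftRight (10 * x))) := by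
  intro j hj
  have hp := h _ (testBit_shiftRight.1 (testBit_of_testBit_expandRow hj))
  rwa [show (10 * x + (100 * (j / 100) + j % 10)) / 100 = j / 100 by omega,
    show Fin.ofNat 10 ((10 * x + (100 * (j / 100) + j % 10)) / 10) = x by ext; simp; omega,
    show Fin.ofNat 10 (10 * x + (100 * (j / 100) + j % 10)) = Fin.ofNat 10 j by
      ext; simp; omega] at hp

theorem AllBits.expandColumn_spreadRight (h : AllBits p H) :
    AllBits (fun s x _ => ∃ z, p s x z) (expandColumn (spreadRight 1 H)) := by
  intro j hj
  obtain ⟨z, hz, hj⟩ := exists_of_testBit_spreadRight (testBit_of_testBit_expandColumn hj)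
  have hp := h _ hj
  rw [show (10 * (j / 10) + z * 1) / 100 = j / 100 by omega,
    show Fin.ofNat 10 ((10 * (j / 10) + z * 1) / 10) = Fin.ofNat 10 (j / 10) by
      ext; simp; omega] at hp
  exact ⟨_, hp⟩

theorem AllBits.expandRow_spreadRight (h : AllBits p H) :
    AllBits (fun s _ y => ∃ z, p s z y) (expandRow (spreadRight 10 H)) := by
  intro j hj
  obtain ⟨z, hz, hj⟩ := exists_of_testBit_spreadRight (testBit_of_testBit_expandRow hj)
  have hp := h _ hj
  rw [show (100 * (j / 100) + j % 10 + z * 10) / 100 = j / 100 by omega,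
    show Fin.ofNat 10 (100 * (j / 100) + j % 10 + z * 10) = Fin.ofNat 10 j by
      ext; simp; omega] at hp
  exact ⟨_, hp⟩

/-- The entries with `f 0 x < f 0 y` in the first and `f 28 x < f 28 y` in the second half turn, if
`f 0` is increasing. Such an entry, once lost, does not recur before the end of the half turn. -/
def decreasing : ℕ :=
  (stack 28 fun x y => x < y).lor ((stack 28 fun x y => y < x).shiftLeft (100 * 28))

/-- The entries `(y, x)` for `(x, y)` in `decreasing`. -/
def increasing : ℕ :=
  (stack 28 fun x y => y < x).lor ((stack 28 fun x y => x < y).shiftLeft (100 * 28))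

/-- The times `14` and `42` of the narrow cells in which nothing can happen when there is a swap
in the narrow cell at the time `0`. -/
def constant : ℕ :=
  ((stack 1 fun _ _ => true).shiftLeft (100 * 14)).lor
    ((stack 1 fun _ _ => true).shiftLeft (100 * 42))

/-- The diagonal entries at all times. -/
def diagonal : ℕ := stack 56 fun x y => x = y

/-- Monotonicity: decreasing entries extend to times `k` earlier, increasing ones to times `k`
later. -/
def fill (k H : ℕ) : ℕ :=
  H.lor ((((H.land decreasing).shiftRight (100 * k)).land decreasing).lor
    (((H.land increasing).shiftLeft (100 * k)).land increasing))

/-- Constancy across the cells in which nothing can happen. -/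
def tie (H : ℕ) : ℕ :=
  H.lor (((H.land constant).shiftLeft (100 * 1)).lor ((H.shiftRight (100 * 1)).land constant))

/-- Transitivity through `y`. -/
def transit (y : Fin 10) (H : ℕ) : ℕ :=
  H.lor ((expandColumn (H.shiftRight y)).land (expandRow (H.shiftRight (10 * y))))

/-- If `W` records links, the entries `(x, y)` for which `x` is the upper end of a link. -/
def ends (W : ℕ) : ℕ := rotate 28 (expandColumn (spreadRight 1 W))

/-- If `W` records links, the entries `(x, y)` for which `y` is the lower end of a link. -/
def starts (W : ℕ) : ℕ := rotate 28 (expandRow (spreadRight 10 W))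

/-- If `W` records links, the entries which would extend some of them to a chain of length four. -/
def unlinked (W : ℕ) : ℕ :=
  ((starts (W.land (ends W))).lor (ends (W.land (starts W)))).lor ((ends W).land (starts W))

/-- If `U` records pairs that are not linked, and `G` is `H` moved by `15`, one of the two
inequalities in a link implies the reverse of the other. -/
def unlinkWith (U G H : ℕ) : ℕ :=
  (H.lor (rotate 13 (U.land H))).lor (rotate 28 (U.land G))

/-- The consequences of there being no chains of length four. -/
def unlink (H : ℕ) : ℕ :=
  unlinkWith (unlinked (H.land (rotate 15 H))) (rotate 15 H) H

/-- One round of consequences of the entries of `H`. -/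
def propagate (H : ℕ) : ℕ :=
  transit 0 <| transit 1 <| transit 2 <| transit 3 <| transit 4 <| transit 5 <| transit 6 <|
    transit 7 <| transit 8 <| transit 9 <| unlink <|
      fill 1 <| fill 2 <| fill 4 <| fill 8 <| fill 16 <| tie H

/-- Adds to `H` the entry `(x, y)` at the time `s`, together with its mirror image. -/
def assume (s : ℕ) (x y : Fin 10) (H : ℕ) : ℕ :=
  H.lor ((Nat.shiftLeft 1 (100 * s + 10 * x + y)).lor
    (Nat.shiftLeft 1 (100 * (s + 28) + 10 * y + x)))

/-- Derives a contradiction from `H`, by propagation and, whenever that stalls, by distinguishing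
the two orders of the pair named by the next entry of the certificate `c`. Returns the unused part
of `c`, or `none` on failure. -/
def refute : ℕ → List ℕ → ℕ → Option (List ℕ)
  | 0, _, _ => none
  | n + 1, c, H =>
    if (propagate H).land diagonal ≠ 0 then some c
    else if propagate H ≠ H then refute n c (propagate H)
    else match c with
      | [] => none
      | j :: c =>
        if Fin.ofNat 10 (j / 10) = Fin.ofNat 10 j then none
        else (refute n c (assume (j / 100) (Fin.ofNat 10 j) (Fin.ofNat 10 (j / 10)) H)).bind
          fun c => refute n c (assume (j / 100) (Fin.ofNat 10 (j / 10)) (Fin.ofNat 10 j) H)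

/-- The matrices at the times `0`, `1`, `28` and `29` of a sweep for which `f 0` is increasing and
`i` and `i + 1` swap in the first cell. -/
def root (i : ℕ) : ℕ :=
  let swapped : ℕ → ℕ → Bool := fun x y => Equiv.swap i (i + 1) x < Equiv.swap i (i + 1) y
  (((stack 1 fun x y => x < y).lor ((stack 1 swapped).shiftLeft (100 * 1))).lor
    ((stack 1 fun x y => y < x).shiftLeft (100 * 28))).lor
    ((stack 1 fun x y => swapped y x).shiftLeft (100 * 29))

section Soundness

variable {s : ℕ} {f : ℕ → Fin 10 → ℝ} {U W G : ℕ}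

/-- `H` records true inequalities between the heights `f`. -/
def Records (f : ℕ → Fin 10 → ℝ) (H : ℕ) : Prop := AllBits (fun s x y => f s x < f s y) H

theorem allBits_decreasing (hf : Sweep f) (h₀ : StrictMono (f 0)) :
    AllBits (fun s x y => (s < 28 ∧ f 0 x < f 0 y) ∨ (28 ≤ s ∧ s < 56 ∧ f 28 x < f 28 y))
      decreasing := by
  refine (AllBits.stack.mono fun s x y h => ?_).lor (AllBits.stack.shiftLeft.mono fun s x y h => ?_)
  · exact .inl ⟨h.1, h₀ (of_decide_eq_true h.2)⟩
  · exact .inr ⟨h.1, by omega, hf.lt_half_turn.2 (h₀ (of_decide_eq_true h.2.2))⟩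

theorem allBits_increasing (hf : Sweep f) (h₀ : StrictMono (f 0)) :
    AllBits (fun s x y => (s < 28 ∧ f 0 y < f 0 x) ∨ (28 ≤ s ∧ s < 56 ∧ f 28 y < f 28 x))
      increasing := by
  refine (AllBits.stack.mono fun s x y h => ?_).lor (AllBits.stack.shiftLeft.mono fun s x y h => ?_)
  · exact .inl ⟨h.1, h₀ (of_decide_eq_true h.2)⟩
  · exact .inr ⟨h.1, by omega, hf.lt_half_turn.2 (h₀ (of_decide_eq_true h.2.2))⟩

theorem allBits_constant : AllBits (fun s _ _ => s = 14 ∨ s = 42) constant :=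
  (AllBits.stack.shiftLeft.mono fun s _ _ h => by omega).lor
    (AllBits.stack.shiftLeft.mono fun s _ _ h => by omega)

protected theorem Records.fill (hf : Sweep f) (h₀ : StrictMono (f 0)) (hH : Records f H) :
    Records f (fill k H) := by
  have hdec := allBits_decreasing hf h₀
  have hinc := allBits_increasing hf h₀
  have h₂₈ : ∀ {x y}, f 0 x < f 0 y → ¬ f 28 x < f 28 y :=
    fun h h' => h.not_gt (hf.lt_half_turn.1 h')
  refine hH.lor (AllBits.lor ?_ ?_)
  · refine ((hH.land hdec).shiftRight.land hdec).mono fun s x y ⟨⟨h, ht⟩, hs⟩ => ?_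
    rcases ht with ⟨ht, ht'⟩ | ⟨ht, ht₅₆, ht'⟩ <;> rcases hs with ⟨hs, hs'⟩ | ⟨hs, -⟩
    · exact hf.lt_of_lt_of_lt (s := 0) (by omega) (by omega) (by omega) ht' h
    · omega
    · exact absurd ht' (h₂₈ hs')
    · exact hf.lt_of_lt_of_lt hs (by omega) (by omega) ht' h
  · refine ((hH.land hinc).shiftLeft.land hinc).mono fun s x y ⟨⟨_, h, hs⟩, ht⟩ => ?_
    rcases ht with ⟨ht, ht'⟩ | ⟨ht, ht₅₆, ht'⟩ <;> rcases hs with ⟨hs, hs'⟩ | ⟨hs, -⟩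
    · exact hf.swap_once (s := 0) (by omega) (by omega) (by omega) ht' h
    · omega
    · exact absurd ht' (h₂₈ hs')
    · exact hf.swap_once hs (by omega) (by omega) ht' h

protected theorem Records.tie (hf : Sweep f) {a b : Fin 10} (hab : Swap f 0 a b)
    (hH : Records f H) : Records f (tie H) := by
  have hswap : ∀ {s x y}, s = 14 ∨ s = 42 → ¬ Swap f s x y := by
    rintro s x y (rfl | rfl)
    · exact hf.not_swap_of_odd hab (k := 1) rfl
    · exact hf.not_swap_of_odd hab (k := 3) rfl
  refine hH.lor (AllBits.lor ?_ ?_)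
  · refine (hH.land allBits_constant).shiftLeft.mono fun s x y ⟨hs, hxy, hs'⟩ => ?_
    have := hf.lt_succ hxy (hswap hs')
    rwa [Nat.sub_add_cancel hs] at this
  · exact (hH.shiftRight.land allBits_constant).mono fun s x y ⟨hxy, hs⟩ =>
      hf.lt_of_lt_succ hxy (hswap hs)

protected theorem Records.transit (y : Fin 10) (hH : Records f H) : Records f (transit y H) :=
  hH.lor (((AllBits.expandColumn_shiftRight y hH).land (AllBits.expandRow_shiftRight y hH)).mono
    fun _ _ _ h => h.1.trans h.2)

protected theorem AllBits.ends (hp : Function.Periodic p 56) (h : AllBits p W) :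
    AllBits (fun s x _ => ∃ z, p (s + 28) x z) (ends W) := by
  have hper : Function.Periodic (fun s (x _ : Fin 10) => ∃ z, p s x z) 56 :=
    hp.comp fun r (x _ : Fin 10) => ∃ z, r x z
  exact AllBits.rotate hper (by norm_num) h.expandColumn_spreadRight

protected theorem AllBits.starts (hp : Function.Periodic p 56) (h : AllBits p W) :
    AllBits (fun s _ y => ∃ z, p (s + 28) z y) (starts W) := by
  have hper : Function.Periodic (fun s (_ y : Fin 10) => ∃ z, p s z y) 56 :=
    hp.comp fun r (_ y : Fin 10) => ∃ z, r z y
  exact AllBits.rotate hper (by norm_num) h.expandRow_spreadRight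

theorem AllBits.ends_link (hf : Sweep f) (h : AllBits (Link f) W) :
    AllBits (fun s x _ => ∃ z, Link f s z x) (ends W) :=
  (h.ends hf.periodic_link).mono fun _ _ _ ⟨z, hz⟩ => ⟨z, hf.link_half_turn.1 hz⟩

theorem AllBits.starts_link (hf : Sweep f) (h : AllBits (Link f) W) :
    AllBits (fun s _ y => ∃ z, Link f s y z) (starts W) :=
  (h.starts hf.periodic_link).mono fun _ _ _ ⟨z, hz⟩ => ⟨z, hf.link_half_turn.1 hz⟩

theorem AllBits.ends_land_starts (hf : Sweep f) (h : AllBits (Link f) W) :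
    AllBits (fun s x _ => ∃ y z, Link f s z y ∧ Link f s y x) (ends (W.land (starts W))) := by
  have hper : Function.Periodic (fun s x y => Link f s x y ∧ ∃ z, Link f s y z) 56 :=
    hf.periodic_link.comp fun r x y => r x y ∧ ∃ z, r y z
  refine ((h.land (h.starts_link hf)).ends hper).mono fun s x _ ⟨y, hxy, z, hyz⟩ => ?_
  exact ⟨y, z, hf.link_half_turn.1 hyz, hf.link_half_turn.1 hxy⟩

theorem AllBits.starts_land_ends (hf : Sweep f) (h : AllBits (Link f) W) :
    AllBits (fun s _ y => ∃ x z, Link f s y x ∧ Link f s x z) (starts (W.land (ends W))) := by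
  have hper : Function.Periodic (fun s x y => Link f s x y ∧ ∃ z, Link f s z x) 56 :=
    hf.periodic_link.comp fun r x y => r x y ∧ ∃ z, r z x
  refine ((h.land (h.ends_link hf)).starts hper).mono fun s _ y ⟨x, hxy, z, hzx⟩ => ?_
  exact ⟨x, z, hf.link_half_turn.1 hxy, hf.link_half_turn.1 hzx⟩

protected theorem AllBits.unlinked (hf : Sweep f) (h : AllBits (Link f) W) :
    AllBits (fun s x y => ¬ Link f s x y) (unlinked W) := by
  refine AllBits.lor (AllBits.lor ?_ ?_) ?_
  · exact (h.starts_land_ends hf).mono fun s x y ⟨_, _, h₁, h₂⟩ hxy => hf.not_chain hxy h₁ h₂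
  · exact (h.ends_land_starts hf).mono fun s x y ⟨_, _, h₁, h₂⟩ hxy => hf.not_chain h₁ h₂ hxy
  · exact ((h.ends_link hf).land (h.starts_link hf)).mono
      fun s x y ⟨⟨_, h₁⟩, _, h₂⟩ hxy => hf.not_chain h₁ hxy h₂

protected theorem Records.unlinkWith (hf : Sweep f) (hU : AllBits (fun s x y => ¬ Link f s x y) U)
    (hG : AllBits (fun s x y => f (s + 15) x < f (s + 15) y) G) (hH : Records f H) :
    Records f (unlinkWith U G H) := by
  refine (AllBits.lor hH (AllBits.mono ?_ fun _ _ _ => hf.lt_full_turn.1)).lor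
    (AllBits.mono ?_ fun _ _ _ => hf.lt_full_turn.1)
  · exact AllBits.rotate (hf.periodic_lt.add_const 43) (by norm_num)
      ((hU.land hH).mono fun _ _ _ h => hf.lt_of_not_link_of_lt h.1 h.2)
  · exact AllBits.rotate (hf.periodic_lt.add_const 28) (by norm_num)
      ((hU.land hG).mono fun _ _ _ h => hf.lt_of_not_link_of_lt_add h.1 h.2)

protected theorem Records.unlink (hf : Sweep f) (hH : Records f H) : Records f (unlink H) :=
  have hG := AllBits.rotate hf.periodic_lt (by norm_num) hH
  Records.unlinkWith hf (AllBits.unlinked hf (hH.land hG)) hG hH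

protected theorem Records.propagate (hf : Sweep f) (h₀ : StrictMono (f 0)) {a b : Fin 10}
    (hab : Swap f 0 a b) (hH : Records f H) : Records f (propagate H) :=
  ((((((hH.tie hf hab).fill hf h₀).fill hf h₀).fill hf h₀).fill hf h₀).fill hf h₀).unlink hf
    |>.transit 9 |>.transit 8 |>.transit 7 |>.transit 6 |>.transit 5
    |>.transit 4 |>.transit 3 |>.transit 2 |>.transit 1 |>.transit 0

theorem Records.land_diagonal (hH : Records f H) : H.land diagonal = 0 := by
  by_contra h
  obtain ⟨j, hj⟩ := Nat.exists_testBit_of_ne_zero h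
  obtain ⟨hlt, -, heq⟩ := hH.land AllBits.stack j hj
  rw [Fin.val_inj.1 (of_decide_eq_true heq)] at hlt
  exact lt_irrefl _ hlt

theorem allBits_single {x y : Fin 10} (h : p s x y) :
    AllBits p (Nat.shiftLeft 1 (100 * s + 10 * x + y)) := by
  intro j hj
  rw [testBit_one_shiftLeft hj, show (100 * s + 10 * x + y) / 100 = s by omega,
    show Fin.ofNat 10 ((100 * s + 10 * x + y) / 10) = x by ext; simp; omega,
    show Fin.ofNat 10 (100 * s + 10 * x + y) = y by ext; simp; omega]
  exact h

protected theorem Records.assume (hf : Sweep f) {x y : Fin 10} (h : f s x < f s y)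
    (hH : Records f H) : Records f (assume s x y H) :=
  hH.lor ((allBits_single h).lor (allBits_single (hf.lt_half_turn.2 h)))

theorem not_records_of_refute (hf : Sweep f) (h₀ : StrictMono (f 0)) {a b : Fin 10}
    (hab : Swap f 0 a b) {n : ℕ} {c : List ℕ} {H : ℕ} (h : (refute n c H).isSome) :
    ¬ Records f H := by
  fun_induction refute n c H with
  | case1 => simp at h
  | case2 _ _ _ hdiag => exact fun hH => hdiag (hH.propagate hf h₀ hab).land_diagonal
  | case3 _ _ _ _ _ ih => exact fun hH => ih h (hH.propagate hf h₀ hab)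
  | case4 => simp at h
  | case5 => simp at h
  | case6 _ H _ _ j c hxy ih₁ ih₂ =>
    intro hH
    obtain ⟨_, h⟩ := Option.isSome_iff_exists.1 h
    obtain ⟨c', h₁, h₂⟩ := Option.bind_eq_some_iff.1 h
    rcases hf.lt_or_lt (j / 100) hxy with hlt | hlt
    · exact ih₂ _ (Option.isSome_of_eq_some h₂) (hH.assume hf hlt)
    · exact ih₁ (Option.isSome_of_eq_some h₁) (hH.assume hf hlt)

protected theorem Records.root (hf : Sweep f) (h₀ : StrictMono (f 0)) {i j : Fin 10}
    (hswap : Swap f 0 i j) : Records f (root i) := by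
  have hij := hf.val_add_one_eq_of_swap h₀ hswap
  have h₁ : ∀ {x y : Fin 10}, Equiv.swap (i : ℕ) (i + 1) x < Equiv.swap (i : ℕ) (i + 1) y →
      f 1 x < f 1 y := by
    intro x y h
    rw [hij, Fin.val_injective.swap_apply, Fin.val_injective.swap_apply] at h
    exact hf.lt_one_of_swap h₀ hswap h
  refine AllBits.lor (AllBits.lor (AllBits.lor ?_ ?_) ?_) ?_
  · refine AllBits.stack.mono fun s x y ⟨hs, h⟩ => ?_
    obtain rfl : s = 0 := by omega
    exact h₀ (of_decide_eq_true h)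
  · refine AllBits.stack.shiftLeft.mono fun s x y ⟨h₁s, hs, h⟩ => ?_
    obtain rfl : s = 1 := by omega
    exact h₁ (of_decide_eq_true h)
  · refine AllBits.stack.shiftLeft.mono fun s x y ⟨h₂₈s, hs, h⟩ => ?_
    obtain rfl : s = 0 + 28 := by omega
    exact hf.lt_half_turn.2 (h₀ (of_decide_eq_true h))
  · refine AllBits.stack.shiftLeft.mono fun s x y ⟨h₂₉s, hs, h⟩ => ?_
    obtain rfl : s = 1 + 28 := by omega
    exact hf.lt_half_turn.2 (h₁ (of_decide_eq_true h))

end Soundness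

/-- For each `i < 5`, the pairs between whose orders `refute` has to distinguish when it starts from
`root i`: the number `100 * s + 10 * x + y` stands for the pair `x`, `y` at the time `s`. The list
was found by a computer search. -/
def certificate : ℕ → List ℕ
  | 0 => List.flatten [
    [1502, 1523, 1589, 1545, 1547, 1519, 812, 2237, 2246, 2059, 1515, 2225, 2235, 1559, 1559],
    [2348, 2278, 1515, 1904, 1205, 823, 2225, 1559, 523, 2256, 523, 1527, 1727, 905, 889],
    [589, 845, 1112, 1405, 1904, 1505, 1112, 2258, 812, 1904, 1515, 889, 1615, 1615, 823],
    [1527, 523, 2279, 2204, 1112, 505, 1815, 505, 1505, 1958, 1112, 1112, 1958, 845, 1112],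
    [1112, 2225, 823, 1559, 523, 812, 2235, 1559, 1904, 1559, 2279, 905, 2246, 1946, 1559],
    [1519, 823, 2225, 1559, 523, 2257, 523, 1526, 1726, 905, 812, 2247, 889, 2058, 1515],
    [1904, 1515, 1615, 856, 1904, 1904, 1515, 1615, 2235, 1559, 1559, 2348, 889, 589, 845],
    [1112, 1405, 1904, 1505, 1112, 2247, 2204, 823, 856, 2525, 1123, 2535, 2269, 889, 505],
    [1515, 1715, 1323, 578, 856, 1515, 2236, 823, 2258, 1526, 523, 523, 1559, 889, 589],
    [845, 1505, 1112, 845, 545, 812, 812, 1559, 2448, 2226, 812, 2268, 1904, 2236, 1569],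
    [1904, 1569, 1112, 2279, 2279, 2104, 1569, 2204, 2268, 812, 1516, 1112, 658, 1904, 2279],
    [506, 2245, 1904, 1569, 1112, 2278, 1406, 2268, 1406, 2278, 1506, 2268, 1506, 1545, 1519],
    [823, 2225, 1559, 523, 2525, 802, 523, 812, 2235, 1559, 2257, 1904, 1515, 878, 1615],
    [1615, 1904, 1559, 2246, 1946, 879, 2538, 867, 2256, 1505, 2289, 1179, 1505, 1505, 2204],
    [2246, 879, 1179, 1946, 2115, 2225, 2257, 1515, 505, 1904, 845, 545, 812, 812, 1559],
    [2447, 879, 867, 2056, 2289, 1167, 2256, 1505, 845, 1559, 1559, 1505, 1519, 812, 2236],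
    [1569, 2267, 1516, 1904, 1904, 1904, 1569, 823, 2226, 1569, 523, 856, 802, 2526, 2245],
    [2267, 1123, 2289, 1506, 1945, 1506, 1945, 2226, 812, 2245, 878, 1904, 2236, 1569, 1569],
    [2347, 1112, 2267, 2004, 2289, 2289, 2104, 1569, 2204, 2245, 1945, 879, 812, 1516, 1179],
    [1904, 1347, 1569, 2347, 2267, 1506, 556, 556, 1545, 1567, 1589, 1546, 835, 1519, 825],
    [2226, 1569, 525, 846, 802, 2526, 812, 2279, 1903, 1516, 1616, 2234, 648, 867, 1516],
    [2257, 2256, 1569, 1569, 2338, 889, 589, 867, 1112, 436, 1506, 1112, 1112, 2226, 2268],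
    [2003, 825, 1569, 525, 812, 2256, 1569, 1903, 1569, 2279, 906, 2203, 2268, 812, 1516],
    [1112, 648, 1903, 2279, 506, 2234, 1903, 1569, 2268, 1506, 546, 546, 2203, 1903, 867],
    [1125, 848, 546, 1519, 825, 2224, 1549, 525, 2246, 525, 1527, 1727, 904, 812, 2257],
    [889, 2224, 1549, 1549, 512, 2248, 1514, 2278, 1514, 1903, 734, 889, 589, 847, 1112],
    [434, 1504, 1112, 1112, 2203, 2236, 825, 1125, 2279, 1325, 504, 1514, 1714, 568, 845],
    [1514, 2257, 834, 534, 2457, 2436, 812, 1549, 825, 2438, 825, 2248, 525, 1527, 1727],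
    [525, 1549, 889, 589, 834, 1504, 1112, 1546, 827, 2225, 1559, 527, 845, 802, 2525],
    [812, 2234, 2289, 2589, 1903, 2225, 1903, 1515, 858, 835, 1559, 2436, 846, 1536, 1146],
    [1828, 2234, 1934, 2415, 1305, 1505, 1815, 1815, 2203, 2289, 1112, 1312, 1903, 1169, 869],
    [2578, 846, 2256, 1505, 1505, 1519, 825, 2224, 1549, 525, 2524, 802, 525, 812, 2289],
    [1903, 2258, 2236, 1514, 2224, 634, 834, 2224, 1549, 2437, 1903, 1537, 2236, 1936, 879],
    [2558, 867, 2246, 1504, 2289, 1814, 1504, 1112, 2257, 825, 525, 1125, 2236, 2203, 1237],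
    [879, 1179, 1903, 2114, 2114, 2247, 1514, 504, 1903, 879, 867, 2046, 1167, 725, 2246],
    [1504, 2289, 1549, 1025, 1504, 834, 845, 1237, 867, 1537, 1148, 1549, 825, 2437, 1556],
    [1589, 1509, 826, 2225, 1559, 526, 845, 802, 2525, 812, 2279, 1903, 1515, 1615, 2267],
    [889, 2225, 1559, 1559, 512, 2225, 1515, 2279, 2234, 2258, 1112, 2103, 689, 1803, 1405],
    [2203, 505, 1505, 1934, 1827, 2203, 2234, 826, 1126, 2279, 505, 1515, 1715, 548, 856],
    [1515, 2267, 835, 535, 2467, 2434, 812, 826, 1559, 2438, 857, 845, 1967, 1559, 1112],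
    [1559, 1505, 1519, 826, 2225, 1559, 526, 845, 802, 2525, 812, 2289, 1903, 2234, 2589],
    [1903, 2225, 1903, 1515, 858, 835, 1559, 2437, 1537, 947, 1828, 2234, 1934, 2415, 1305],
    [1505, 1815, 1815, 2203, 2289, 1112, 1312, 1903, 1179, 879, 2568, 847, 2257, 1505, 1505],
    [836, 2203, 2234, 1237, 879, 856, 1179, 537, 1903, 812, 1515, 815, 1903, 1158, 1158],
    [1903, 1903, 1903, 1703, 1179, 835, 535, 847, 1537, 1147, 812, 1559, 826, 2437, 858],
    [845, 1968, 1559, 1112, 1305, 1559, 1505, 2203, 1903, 2434, 878, 1126, 2325, 1205, 858],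
    [558, 1505, 1589, 1509, 825, 2224, 1549, 525, 2247, 525, 1526, 1726, 904, 812, 2268],
    [1514, 2256, 2237, 578, 845, 1514, 834, 2224, 1549, 2438, 1903, 734, 2269, 2247, 2203],
    [1112, 689, 1903, 504, 1504, 1948, 1112, 1112, 1948, 834, 1112, 1112, 1969, 1112, 689],
    [1803, 1312, 2237, 2203, 825, 1125, 2269, 889, 504, 1514, 1714, 1204, 578, 845, 1514],
    [2256, 2258, 1526, 825, 525, 1112, 889, 825, 2248, 1526, 525, 525, 1549, 589, 834],
    [1504, 1112, 834, 534, 2456, 2437, 812, 825, 1549, 2438, 835, 1519, 825, 2226, 1569],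
    [525, 846, 802, 2526, 812, 2256, 1569, 2267, 1516, 1903, 1903, 1903, 1569, 2234, 2267],
    [1125, 2289, 1506, 1934, 1506, 1934, 2226, 2267, 2003, 825, 1569, 525, 812, 2256, 1569],
    [1903, 1569, 2289, 906, 2203, 2234, 547, 812, 1516, 1112, 1078, 1903, 1903, 1312, 879],
    [1569, 2337, 2267, 1506, 546, 546, 2203, 1903, 879, 847, 546, 1567, 1589, 1556, 1519],
    [812, 2279, 1903, 1516, 1616, 512, 889, 2246, 1569, 2579, 1569, 2246, 1516, 2235, 824],
    [2226, 1569, 524, 856, 802, 2526, 889, 589, 2547, 867, 436, 1506, 1112, 1112, 2226],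
    [2268, 2003, 824, 1569, 524, 812, 2246, 1569, 1903, 1569, 2279, 906, 2203, 2268, 812],
    [1516, 1112, 658, 1903, 2279, 506, 2235, 1903, 1569, 2268, 1506, 556, 556, 1519, 824],
    [2225, 1559, 524, 2256, 524, 1527, 1727, 905, 812, 2247, 2236, 2059, 1515, 2225, 2245],
    [1559, 1559, 2338, 2278, 1515, 1903, 1205, 889, 589, 835, 1112, 2103, 1803, 1405, 1505],
    [1112, 2236, 2223, 2247, 2545, 867, 2203, 824, 857, 524, 1124, 1827, 2279, 1324, 505],
    [1515, 1715, 568, 857, 1515, 2247, 824, 2258, 524, 1527, 1727, 524, 1559, 889, 589],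
    [835, 1505, 1112, 1936, 835, 535, 812, 1559, 824, 2438, 1547, 827, 2224, 1549, 527],
    [2524, 802, 527, 812, 2235, 2289, 2278, 2246, 1514, 1903, 1935, 1236, 848, 834, 1549],
    [2436, 856, 1536, 1148, 2203, 2235, 2289, 1127, 1903, 1169, 869, 2578, 856, 2245, 1504],
    [1504, 1519, 824, 2225, 1559, 524, 2525, 802, 524, 812, 2245, 1559, 2257, 1903, 1515],
    [878, 1615, 1615, 1903, 1559, 2236, 1936, 879, 2548, 867, 2256, 1505, 2289, 1179, 1505],
    [1505, 2203, 2236, 879, 1179, 1936, 2115, 2225, 2257, 1515, 505, 1903, 835, 535, 812],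
    [1559, 824, 2437, 879, 867, 2056, 2289, 1167, 2256, 1505, 835, 1559, 1559, 1505, 1589],
    [1546, 1509, 826, 2224, 1549, 526, 2245, 526, 1527, 1727, 904, 812, 2278, 1514, 2267],
    [889, 2224, 1549, 1549, 1967, 846, 1514, 1903, 734, 2279, 2245, 2203, 1112, 689, 1903],
    [504, 1504, 1948, 1112, 1112, 1948, 834, 1112, 1112, 1979, 1112, 689, 1803, 1312, 2235],
    [2203, 826, 1126, 2279, 1326, 504, 1514, 1714, 558, 846, 1514, 2267, 858, 558, 826],
    [1527, 1112, 734, 1304, 1979, 1627, 2267, 1158, 834, 1549, 1549, 847, 834, 1504, 834],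
    [534, 2467, 2435, 812, 826, 1549, 2438, 2237, 2203, 824, 856, 2525, 1124, 2545, 2268],
    [505, 1515, 1715, 578, 856, 1515, 889, 1903, 824, 2258, 524, 1526, 1726, 524, 1559],
    [889, 589, 835, 1505, 1112, 835, 535, 812, 1559, 912, 2438, 1546, 1519, 826, 2224],
    [1549, 526, 2524, 802, 526, 812, 2289, 1903, 2268, 2235, 1514, 2224, 634, 834, 2224],
    [1549, 2437, 1903, 1537, 2235, 1935, 879, 2568, 857, 2245, 1504, 2289, 1814, 1504, 1112],
    [2203, 2235, 879, 846, 1179, 537, 1903, 812, 1514, 1935, 814, 1148, 1237, 1148, 1903],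
    [1903, 1903, 1703, 1179, 834, 534, 857, 1537, 1148, 812, 1549, 826, 2437, 879, 826],
    [2247, 526, 526, 1549, 2224, 2468, 857, 2245, 1504, 1026, 1504, 1519, 824, 2226, 1569],
    [524, 856, 802, 2526, 812, 2246, 1569, 2267, 1516, 1903, 1903, 1903, 1569, 2235, 2267],
    [1124, 2289, 1506, 1935, 1506, 1935, 2226, 2267, 2003, 824, 1569, 524, 812, 2246, 1569],
    [1903, 1569, 2289, 906, 2203, 2235, 1935, 879, 812, 1516, 1903, 1112, 1179, 1337, 1569],
    [2337, 2267, 1506, 556, 556, 1523, 1534, 1589, 1557, 1525, 1519, 819, 2226, 823, 813],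
    [2247, 2226, 2059, 1515, 2235, 2245, 1559, 1559, 2328, 2278, 1515, 1902, 1205, 834, 2235],
    [1559, 534, 2256, 534, 1537, 1737, 905, 889, 589, 825, 1113, 2102, 1802, 1405, 1505],
    [1113, 2226, 867, 2202, 834, 857, 534, 1134, 1837, 2279, 1334, 505, 1515, 1715, 568],
    [857, 1515, 2247, 2246, 1113, 534, 2245, 1947, 1559, 1113, 2258, 834, 1537, 534, 889],
    [1505, 589, 1113, 589, 825, 1113, 2279, 2247, 1559, 1926, 825, 525, 813, 1037, 1559],
    [2428, 2235, 813, 2247, 2547, 1113, 2279, 1519, 826, 813, 2268, 1516, 867, 1902, 867],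
    [1947, 1569, 1113, 2202, 526, 889, 1113, 589, 1506, 867, 2225, 2202, 889, 1902, 2268],
    [1113, 567, 1569, 1569, 1037, 2428, 1013, 2202, 2225, 813, 2279, 1516, 558, 867, 1516],
    [2247, 834, 2547, 2279, 1902, 1702, 2078, 1113, 1113, 826, 526, 813, 1037, 1569, 2428],
    [867, 856, 1947, 1569, 1113, 1569, 1506, 2227, 2202, 834, 856, 2535, 1134, 2545, 2268],
    [505, 1515, 1715, 2246, 1515, 2235, 1902, 834, 2258, 534, 1536, 1736, 534, 1559, 889],
    [589, 825, 1505, 1113, 825, 525, 813, 813, 1559, 2428, 1525, 1519, 813, 2226, 878],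
    [2059, 1515, 2235, 1902, 1515, 1615, 2245, 1559, 1559, 2327, 834, 2235, 1559, 534, 2535],
    [2202, 534, 2226, 1926, 879, 2548, 867, 2256, 1505, 2289, 1505, 1113, 2226, 2202, 879],
    [1179, 567, 2115, 2257, 1515, 505, 1902, 879, 867, 2056, 2289, 1167, 2256, 1505, 825],
    [1559, 1559, 1505, 825, 525, 813, 1038, 1559, 2427, 2235, 813, 2248, 2548, 1113, 2267],
    [1925, 1519, 834, 2236, 1569, 534, 856, 2202, 2536, 813, 2246, 1569, 2267, 1516, 1902],
    [1902, 1902, 1569, 2202, 2267, 2289, 1113, 1902, 1179, 1902, 879, 2548, 857, 2267, 1506],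
    [1506, 2202, 2225, 1227, 879, 813, 1902, 868, 1516, 868, 1616, 1902, 427, 1113, 1113],
    [1179, 826, 526, 813, 1038, 1569, 2427, 868, 856, 1948, 1569, 1113, 1306, 1569, 1506],
    [1545, 1567, 1589, 1546, 1509, 826, 813, 2268, 1516, 867, 1902, 867, 1957, 1569, 1113],
    [2202, 526, 889, 1113, 589, 1506, 867, 2202, 1902, 1569, 2424, 889, 2268, 1113, 567],
    [1569, 1013, 2209, 2224, 2202, 813, 2279, 1516, 548, 867, 1516, 2257, 867, 1113, 889],
    [1113, 589, 1902, 1902, 867, 846, 1957, 1569, 1113, 1569, 1506, 826, 526, 813, 813],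
    [1569, 2428, 2256, 1113, 1519, 835, 2234, 1549, 535, 2246, 535, 1537, 1737, 803, 813],
    [2257, 889, 2234, 1549, 1549, 513, 2248, 1514, 2278, 1514, 1902, 724, 889, 589, 847],
    [1113, 424, 1504, 1113, 1113, 2226, 2202, 835, 1135, 2279, 889, 504, 1514, 1714, 624],
    [568, 845, 1514, 2257, 2258, 1113, 2046, 1537, 1737, 889, 835, 2248, 1537, 535, 535],
    [1549, 589, 824, 1504, 1113, 824, 524, 2457, 2426, 813, 1037, 1549, 2428, 1546, 837],
    [2235, 1559, 537, 845, 2202, 2535, 813, 2224, 2289, 2589, 1902, 2235, 1902, 1515, 858],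
    [825, 1559, 2426, 846, 1526, 1146, 1838, 2224, 1924, 2415, 1305, 1505, 1815, 1815, 2202],
    [2289, 1113, 1313, 1902, 1169, 869, 2578, 846, 2256, 1505, 1505, 1519, 835, 2234, 1549],
    [535, 2534, 2202, 535, 813, 2289, 1902, 2258, 2226, 1514, 2234, 624, 824, 524, 1549],
    [2427, 1902, 1527, 2226, 1926, 879, 2558, 867, 2246, 1504, 1726, 1179, 1504, 1504, 2226],
    [2202, 879, 845, 1179, 527, 1902, 813, 1514, 1926, 814, 1148, 1227, 1148, 1902, 1902],
    [1902, 1702, 1179, 879, 835, 2247, 535, 535, 1549, 2234, 2458, 867, 2246, 1504, 1035],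
    [1504, 824, 524, 867, 1527, 1148, 813, 1038, 1549, 2427, 1589, 1556, 1519, 836, 2235],
    [1559, 536, 845, 2202, 2535, 813, 2279, 1902, 1515, 1615, 2224, 648, 856, 1515, 2267],
    [825, 2267, 525, 1559, 2428, 889, 2224, 1924, 589, 857, 1113, 1505, 1113, 1113, 1837],
    [2202, 2224, 836, 1136, 2279, 505, 1515, 1715, 548, 856, 1515, 2267, 825, 525, 2467],
    [2424, 813, 1037, 1559, 2428, 857, 845, 1967, 1559, 1113, 1559, 1505, 2227, 2202, 813],
    [2269, 1514, 578, 845, 1514, 2256, 835, 889, 1135, 589, 1902, 1927, 835, 2248, 535],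
    [1536, 1736, 535, 1549, 889, 589, 824, 1504, 1113, 824, 524, 2456, 2427, 813, 813],
    [1549, 2428, 1535, 1509, 826, 813, 1902, 878, 868, 1516, 1516, 878, 868, 1616, 1616],
    [868, 1113, 2002, 1306, 568, 1569, 2202, 1902, 878, 1113, 1702, 879, 1179, 1506, 868],
    [2224, 2202, 879, 1902, 846, 1958, 1569, 1113, 1569, 1038, 1569, 2427, 1013, 2207, 2224],
    [2202, 879, 1179, 547, 1206, 2267, 1516, 506, 1902, 847, 879, 1506, 835, 846, 1569],
    [535, 1569, 1069, 826, 1506, 826, 526, 813, 813, 1569, 2427, 2236, 835, 1569, 535],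
    [2267, 1519, 836, 2235, 1559, 536, 845, 2202, 2535, 813, 2289, 1902, 2224, 2589, 1902],
    [2235, 1902, 1515, 858, 825, 1559, 2427, 1527, 947, 1815, 2257, 858, 2202, 1113, 2224],
    [1924, 879, 2568, 847, 2257, 1505, 2289, 1179, 1505, 1505, 2202, 2224, 879, 856, 1179],
    [527, 1902, 813, 1515, 1924, 815, 1158, 1227, 1158, 1902, 1902, 1902, 1702, 1179, 825],
    [525, 847, 1527, 1147, 813, 1038, 1559, 2427, 858, 845, 1968, 1559, 1113, 1305, 1559],
    [1505, 1546, 1589, 1509, 836, 2234, 1549, 536, 1537, 536, 2534, 813, 2225, 2278, 1514],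
    [2578, 958, 1902, 1204, 558, 846, 1514, 847, 824, 1549, 2428, 2467, 2425, 2279, 2245],
    [2202, 1113, 689, 1902, 504, 1504, 1948, 1113, 1113, 1948, 824, 1113, 1113, 1979, 1113],
    [689, 1802, 1313, 2225, 2202, 836, 1136, 2279, 889, 504, 1514, 1714, 1204, 558, 846],
    [1514, 2267, 857, 557, 889, 836, 2248, 1537, 536, 536, 1549, 589, 824, 1504, 1113],
    [2334, 824, 524, 2467, 2425, 813, 1037, 1549, 2428, 1519, 836, 2234, 1549, 536, 2534],
    [2202, 536, 813, 2225, 2289, 2589, 1902, 1514, 2234, 1902, 627, 1902, 2102, 848, 824],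
    [1549, 2427, 857, 1527, 1148, 2225, 1925, 879, 2568, 857, 2245, 1504, 2289, 1814, 1504],
    [1113, 2225, 2202, 879, 846, 1179, 527, 1902, 813, 1514, 1925, 814, 1148, 1227, 1148],
    [1902, 1902, 1902, 1702, 1179, 879, 836, 2247, 536, 536, 1549, 2234, 2468, 857, 2245],
    [1504, 1036, 1504, 824, 524, 857, 1527, 1148, 813, 1038, 1549, 2427, 1519, 847, 819],
    [823, 1902, 2225, 2202, 869, 1169, 526, 1902, 869, 856, 2045, 2289, 1156, 2245, 1504],
    [824, 1549, 1549, 1169, 1504, 1504, 547, 1038, 1549, 2326, 1226, 1514, 814, 1526, 2225],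
    [1925, 2446, 1226, 856, 1526, 1148, 2202, 2225, 1149, 813, 1148, 1902, 1902, 2289, 1113],
    [1902, 1169, 856, 1526, 1148, 869, 856, 1504, 1504, 2225, 2202, 1226, 869, 847, 1169],
    [526, 1902, 813, 1514, 814, 1925, 1148, 1148, 1902, 1902, 1902, 1702, 1169, 869, 856],
    [2045, 2278, 1156, 824, 1549, 1549, 848, 824, 1504, 1037, 1504, 824, 524, 856, 1526],
    [1148, 813, 1038, 1549, 2426, 1589, 1545, 1509, 826, 814, 867, 2268, 1516, 1902, 867],
    [1957, 1569, 1114, 2202, 526, 889, 1114, 589, 1506, 867, 2202, 1902, 1569, 2423, 889],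
    [2268, 1114, 567, 1569, 1014, 826, 814, 1902, 2268, 1516, 2256, 889, 1616, 867, 1616],
    [867, 1957, 1569, 1114, 2202, 526, 889, 1114, 589, 1506, 2202, 1902, 1569, 2423, 867],
    [889, 1014, 845, 836, 1569, 545, 1569, 838, 536, 1509, 856, 825, 814, 789, 638],
    [857, 1967, 1559, 1114, 2202, 638, 1114, 1902, 1114, 1505, 2223, 2202, 889, 857, 1014],
    [1902, 835, 846, 1559, 546, 535, 1559, 1047, 1559, 2428, 1515, 815, 2423, 2202, 2223],
    [814, 1157, 1902, 1902, 1902, 1702, 538, 1114, 2567, 2328, 1505, 2209, 2202, 2223, 846],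
    [857, 1146, 1923, 889, 1146, 1515, 589, 856, 1515, 1228, 825, 525, 2467, 2423, 814],
    [1047, 1559, 2428, 857, 835, 1967, 1559, 1114, 1559, 1505, 2245, 1114, 1578, 1545, 1509],
    [826, 814, 1902, 878, 868, 1516, 1516, 878, 868, 1616, 1616, 868, 1114, 1923, 1306],
    [568, 1569, 2202, 1902, 878, 1114, 1702, 879, 1179, 1506, 868, 2202, 1902, 1569, 2423],
    [879, 836, 1958, 1569, 1114, 1569, 1014, 2202, 2223, 1227, 879, 814, 1902, 868, 1516],
    [868, 1616, 1902, 1702, 1114, 1114, 1179, 826, 526, 814, 1048, 1569, 2427, 837, 879],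
    [1506, 845, 836, 1569, 545, 1569, 1069, 826, 1506, 1509, 858, 825, 814, 1114, 2002],
    [1305, 558, 1559, 2223, 2202, 879, 1902, 2257, 1114, 558, 1559, 1048, 1559, 2427, 2202],
    [2223, 1923, 879, 2257, 1179, 1515, 1902, 1158, 1158, 837, 1527, 1137, 1505, 2207, 2223],
    [2202, 1227, 879, 727, 2257, 1179, 1515, 505, 1158, 1902, 1902, 858, 1014, 1205, 858],
    [835, 1968, 1559, 1114, 1305, 1559, 1505, 825, 525, 837, 1527, 1137, 814, 1048, 1559],
    [2427, 2202, 2245, 1114, 2268, 835, 2289, 1559, 1559, 2257, 1509, 825, 814, 858, 2223],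
    [1515, 2278, 2245, 2578, 1902, 514, 2278, 1158, 1902, 1902, 836, 1526, 1136, 858, 1114],
    [2002, 1305, 558, 1559, 2202, 1902, 868, 1114, 1702, 869, 1169, 1505, 858, 2223, 2202],
    [1902, 814, 869, 835, 1978, 1559, 1114, 1559, 1048, 1559, 2426, 1014, 2206, 858, 2223],
    [2202, 847, 1147, 1902, 835, 1978, 1559, 1114, 1305, 1559, 825, 2245, 1048, 1559, 2426],
    [2202, 2223, 1923, 814, 2289, 2278, 2256, 1515, 868, 1114, 1169, 1158, 836, 1526, 1136],
    [1505, 2202, 2245, 1114, 2278, 835, 2289, 1559, 1559, 2256]]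
  | 1 => List.flatten [
    [1502, 1523, 1589, 1545, 1568, 2215, 2258, 2004, 801, 2235, 1559, 501, 1559, 1904, 1559],
    [1517, 2215, 2258, 2004, 801, 2235, 1559, 501, 1559, 1904, 1559, 1516, 2216, 2268, 2004],
    [801, 2236, 1569, 501, 1569, 1904, 1569, 1556, 2216, 2267, 2004, 801, 2236, 1569, 501],
    [1569, 1904, 1569, 2215, 2257, 2004, 801, 2235, 1559, 501, 1559, 1904, 1559, 1524, 1589],
    [1535, 1578, 2215, 2258, 2003, 801, 2245, 1559, 501, 1559, 1903, 1559, 1516, 2215, 2258],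
    [2003, 801, 2245, 1559, 501, 1559, 1903, 1559, 1517, 2216, 2268, 2003, 801, 2246, 1569],
    [501, 1569, 1903, 1569, 1556, 2216, 2267, 2003, 801, 2246, 1569, 501, 1569, 1903, 1569],
    [2215, 2257, 2003, 801, 2245, 1559, 501, 1559, 1903, 1559, 1545, 1546, 1534, 2247, 2214],
    [1516, 801, 2256, 834, 1903, 1549, 1549, 1589, 1526, 2215, 1915, 801, 2279, 2267, 889],
    [1559, 501, 1559, 2216, 2268, 2003, 801, 2256, 1569, 501, 1569, 1903, 1569, 1567, 2215],
    [1915, 801, 858, 2234, 558, 1559, 857, 768, 1536, 1559, 1526, 2215, 1915, 801, 878],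
    [847, 1337, 1147, 2268, 1559, 2589, 1437, 1537, 1559, 2216, 2267, 2003, 801, 2256, 1569],
    [501, 1569, 1903, 1569, 1589, 2214, 2246, 801, 2257, 834, 1903, 1549, 1549, 1517, 2214],
    [2246, 801, 2258, 834, 2236, 1549, 1537, 1549, 1546, 1589, 2214, 2245, 801, 2267, 834],
    [1903, 1549, 1549, 1517, 2214, 2245, 801, 2268, 834, 2235, 1549, 1537, 1549, 2214, 2245],
    [801, 2278, 834, 1903, 1549, 1536, 1549, 1513, 1524, 1545, 1546, 845, 2202, 1549, 2247],
    [1536, 835, 2234, 1549, 824, 1589, 824, 845, 2202, 1549, 868, 568, 1537, 1637, 847],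
    [547, 1549, 824, 524, 1527, 845, 2202, 1549, 867, 735, 835, 535, 1549, 1534, 1589],
    [1578, 825, 1125, 2202, 1559, 2257, 1536, 834, 2235, 1559, 1558, 826, 867, 2202, 1569],
    [856, 2502, 1103, 1569, 1569, 1003, 825, 1125, 2202, 1559, 2256, 1537, 834, 2235, 1559],
    [1556, 826, 868, 2202, 1569, 856, 1103, 1569, 1569, 1003, 825, 1125, 2202, 1559, 879],
    [867, 858, 558, 1559, 1589, 824, 846, 2202, 1549, 858, 558, 1537, 1637, 847, 547],
    [1549, 1579, 846, 2202, 1549, 857, 736, 848, 548, 1549, 824, 524, 1527, 847, 2202],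
    [1549, 856, 737, 848, 548, 1549, 824, 524, 1526, 1589, 1535, 826, 867, 2202, 1569],
    [846, 2502, 1103, 1569, 1569, 1003, 825, 857, 2202, 1559, 845, 2502, 1103, 1559, 1559],
    [1003, 1535, 826, 868, 2202, 1569, 846, 1103, 1569, 1569, 1003, 1569, 857, 2202, 1559],
    [846, 2278, 2289, 845, 1559, 1559, 825, 525, 1526, 825, 525, 1527, 858, 2202, 1559],
    [845, 2502, 1103, 1559, 1559, 1003, 1589, 1545, 826, 867, 2202, 1569, 836, 1104, 1569],
    [1569, 1004, 825, 857, 2202, 1559, 835, 2502, 1104, 1559, 1559, 1004, 1558, 1569, 857],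
    [2202, 1559, 836, 2278, 2289, 835, 1559, 1559, 825, 1526, 2002, 825, 525, 1527, 858],
    [2202, 1559, 835, 2502, 1104, 1559, 1559, 1004, 826, 868, 2202, 1569, 836, 1104, 1569],
    [1569, 1004]]
  | 2 => List.flatten [
    [1534, 1513, 1589, 1556, 1579, 2225, 2258, 2201, 2246, 1559, 1526, 2226, 2201, 867, 2268],
    [2268, 1569, 1527, 2225, 2258, 2201, 2247, 1559, 1527, 1516, 2226, 2201, 878, 1901, 2267],
    [1569, 1528, 2225, 2257, 2201, 2248, 1559, 1535, 1502, 1503, 1526, 1567, 1589, 814, 867],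
    [1569, 845, 2201, 857, 2201, 1559, 815, 1545, 1568, 814, 868, 1569, 845, 2201, 834],
    [2203, 1903, 1549, 846, 1549, 2069, 901, 2247, 1101, 1589, 1501, 835, 535, 1538, 735],
    [2203, 1903, 1559, 2103, 1559, 2003, 1135, 2257, 1101, 856, 2201, 1559, 815, 856, 2213],
    [1559, 815, 1545, 1589, 834, 847, 801, 501, 1549, 2248, 834, 1537, 601, 848, 801],
    [501, 1549, 867, 2226, 1589, 835, 535, 1538, 735, 2203, 857, 1559, 2079, 801, 2278],
    [1101, 835, 535, 1537, 735, 858, 801, 1559, 501, 2257, 1557, 1589, 1567, 836, 536],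
    [1538, 736, 2203, 1903, 1569, 2103, 1569, 2003, 1136, 2278, 1101, 834, 847, 801, 501],
    [1549, 2248, 1546, 834, 1537, 601, 848, 801, 501, 1549, 857, 1579, 836, 536, 1537],
    [736, 868, 801, 501, 1569, 857, 847, 801, 501, 1549, 856, 834, 1536, 601, 1513],
    [1535, 1589, 1546, 1579, 2224, 2248, 2201, 2256, 1549, 1526, 2226, 2268, 2201, 2257, 1569],
    [1527, 2224, 2248, 2201, 2257, 1549, 1527, 1516, 2226, 2201, 878, 1901, 2267, 1569, 1528],
    [2224, 2247, 2201, 848, 1549, 1556, 1545, 1536, 1589, 2225, 2258, 2201, 857, 1559, 1527],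
    [2225, 2201, 878, 1901, 2257, 1559, 1528, 2257, 2215, 801, 1559, 1567, 1501, 2214, 2245],
    [801, 2268, 1569, 2224, 2246, 2201, 848, 1549, 1536, 1589, 2224, 2248, 2201, 2267, 1549],
    [1527, 2224, 2247, 2201, 848, 1549, 2245, 2267, 801, 1569, 801, 1579, 2256, 2215, 801],
    [1559, 1501, 2256, 2215, 801, 1559, 2225, 2201, 868, 1901, 2256, 1559, 1528, 1589, 1567],
    [836, 536, 1538, 736, 2203, 1903, 1569, 867, 1569, 2079, 901, 2278, 1101, 835, 857],
    [801, 501, 1559, 848, 1556, 835, 1537, 601, 858, 801, 501, 1559, 847, 1579, 836],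
    [536, 1537, 736, 2203, 1903, 1569, 2103, 1569, 2003, 1136, 2267, 546, 835, 1536, 601],
    [858, 801, 501, 1559, 846]]
  | 3 => List.flatten [
    [1523, 1512, 1589, 1515, 1556, 2235, 812, 1559, 1102, 2235, 812, 1559, 1102, 2236, 812],
    [1569, 1102, 1556, 803, 2236, 1103, 1569, 1569, 2235, 812, 1559, 1102, 1525, 1556, 1546],
    [1589, 2235, 2258, 2201, 857, 823, 1559, 1559, 1537, 2235, 2257, 803, 503, 1559, 1079],
    [2201, 1538, 2257, 2215, 2202, 801, 1559, 1545, 1589, 1526, 1578, 846, 678, 2237, 823],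
    [1937, 1504, 1303, 2236, 2268, 2201, 2257, 823, 1569, 1569, 1537, 847, 668, 2236, 823],
    [1936, 1504, 1303, 1501, 2236, 823, 1503, 1123, 2114, 823, 1503, 2236, 2267, 2201, 2258],
    [2212, 1569, 1569, 1538, 1557, 1589, 2256, 2215, 2202, 801, 1559, 2235, 2256, 803, 503],
    [1559, 1069, 2201, 1538, 2235, 2257, 2202, 801, 1559, 1536, 1589, 847, 658, 2235, 823],
    [1935, 1504, 1303, 2235, 823, 1503, 1123, 2114, 823, 1503, 1579, 803, 801, 2236, 2267],
    [1569, 1589, 2236, 2268, 2202, 801, 1569, 2235, 823, 1503, 1123, 2114, 823, 1503, 1535],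
    [1536, 1513, 846, 678, 2224, 2269, 2256, 2038, 1504, 1539, 1538, 1537, 1589, 1567, 1502],
    [2204, 846, 867, 1569, 2201, 2204, 846, 1904, 1569, 1569, 1502, 856, 802, 1559, 2201],
    [815, 845, 857, 2202, 1559, 1556, 1502, 856, 802, 1559, 2201, 815, 845, 858, 2202],
    [1559, 1579, 1502, 846, 812, 512, 1569, 846, 868, 2224, 1569, 1502, 857, 802, 1559],
    [2201, 815, 845, 858, 2202, 1559, 845, 545, 1548, 745, 2204, 1904, 1559, 2104, 1559],
    [2004, 1145, 2257, 1101, 845, 2004, 2204, 1904, 1559, 856, 1559, 2069, 901, 2257, 1101],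
    [2237, 845, 2004, 856, 2259, 556, 801, 1501, 1589, 845, 545, 1548, 745, 2204, 1904],
    [1559, 2104, 1559, 2004, 1145, 2278, 1101, 845, 545, 1547, 745, 858, 801, 1559, 501],
    [2257, 1589, 847, 668, 2224, 2279, 2257, 2038, 1504, 2236, 813, 1503, 1113, 2124, 813],
    [1503, 1501, 1589, 846, 546, 1548, 746, 2204, 1904, 1569, 2104, 1569, 2004, 1146, 2278],
    [1101, 846, 546, 1547, 746, 868, 801, 1569, 501, 857, 1589, 847, 658, 2224, 2279],
    [2267, 2038, 1504, 1579, 2235, 813, 1503, 1113, 2124, 813, 1503, 2235, 813, 1503, 1113],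
    [2124, 813, 1503]]
  | 4 => List.flatten [
    [1535, 1556, 1512, 1579, 1589, 2247, 834, 612, 2215, 1947, 1505, 834, 1549, 834, 2247],
    [1504, 2247, 858, 1559, 1134, 856, 2225, 1559, 2225, 1156, 1589, 856, 2215, 1156, 834],
    [2247, 1504, 2247, 1134, 1525, 1523, 1567, 1589, 1501, 2249, 834, 1949, 1503, 1503, 2246],
    [2212, 1569, 2279, 1569, 2247, 823, 1503, 801, 823, 879, 1503, 2213, 1589, 834, 801],
    [878, 824, 1503, 823, 1503, 1503, 2246, 2212, 1569, 2247, 1946, 1569, 1569, 1501, 1515],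
    [1589, 824, 2268, 2202, 801, 1569, 2268, 801, 1569, 824, 2267, 2202, 801, 1569, 2267],
    [801, 1569, 834, 2246, 1504, 2246, 1134, 1589, 1568, 834, 2278, 802, 1503, 1567, 2246],
    [812, 1569, 1102, 834, 534, 878, 802, 1503, 1503, 1567, 2247, 813, 1503, 1113, 813],
    [879, 1503, 513, 804, 2246, 1104, 1569, 1569, 1579, 2246, 834, 612, 1946, 834, 1549],
    [1589, 2246, 834, 612, 1134, 712, 2215, 2225, 1505, 834, 1549, 834, 2246, 1504, 2246],
    [858, 1559, 1134, 1556, 1525, 1579, 1589, 2235, 856, 1947, 1156, 801, 2248, 513, 1549],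
    [856, 1505, 856, 2235, 1559, 2235, 814, 1504, 1156, 856, 2235, 1559, 2235, 1156, 1559],
    [1505, 1589, 2235, 856, 1947, 1935, 1558, 1515, 1501, 1523, 1589, 1536, 857, 2213, 2279],
    [2513, 1503, 2213, 1913, 1503, 2205, 856, 1905, 1569, 1569, 1538, 1579, 2235, 878, 1503],
    [2202, 2235, 2278, 1503, 2202, 1503, 856, 2212, 1902, 1569, 1589, 856, 601, 812, 857],
    [1569, 1156, 1569, 1569, 856, 2003, 812, 879, 1569, 1569, 1589, 1526, 857, 2223, 2279],
    [813, 1503, 2223, 2201, 1503, 2225, 867, 1569, 2201, 867, 802, 1569, 2201, 1523, 2225],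
    [868, 1569, 2201, 868, 802, 1569, 2201, 1537, 2235, 2278, 1503, 2225, 2201, 1503, 1503],
    [859, 2235, 1159, 1503, 1503, 856, 1947, 2235, 1935, 2235, 1935, 856, 702, 856, 1505],
    [1578, 1502, 2246, 814, 623, 1946, 2246, 824, 613, 1946, 824, 1549, 1537, 824, 2246],
    [1504, 2246, 858, 1559, 1124, 1501, 2235, 857, 1946, 1157, 801, 2248, 513, 1549, 857],
    [1505, 2235, 857, 1946, 1935, 857, 1505]]
  | _ => []

set_option maxRecDepth 10000 in
theorem isSome_refute_root : ∀ i < 5, (refute 100 (certificate i) (root i)).isSome := by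
  decide +kernel

theorem five_le_of_swap {f : ℕ → Fin 10 → ℝ} (hf : Sweep f) (h₀ : StrictMono (f 0)) {i j : Fin 10}
    (h : Swap f 0 i j) : 5 ≤ (i : ℕ) := by
  by_contra! hi
  exact not_records_of_refute hf h₀ h (isSome_refute_root i hi) (.root hf h₀ h)

end BitMatrix

namespace Sweep

variable {ι κ : Type*} {f : ℕ → ι → ℝ}

theorem comp (hf : Sweep f) {g : κ → ι} (hg : Function.Injective g) :
    Sweep fun s => f s ∘ g where
  injective s := (hf.injective s).comp hg
  half_turn s x := hf.half_turn s (g x)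
  swap_once := hf.swap_once
  narrow h h' := by
    obtain ⟨hs, hk⟩ := hf.narrow h h'
    exact ⟨Sym2.map.injective hg hs, hk⟩
  no_chain s l hl := by
    simpa using hf.no_chain s (l.map g) ((List.isChain_map g).2 hl)

theorem shift (hf : Sweep f) (m : ℕ) : Sweep fun s => f (s + 14 * m) where
  injective s := hf.injective _
  half_turn s x := by rw [add_right_comm, hf.half_turn]
  swap_once hst htu hus := hf.swap_once (by omega) (by omega) (by omega)
  narrow {k l x y z u} h h' := by
    have hshift : ∀ {k x y}, Swap (fun s => f (s + 14 * m)) (14 * k) x y →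
        Swap f (14 * (k + m)) x y := by
      intro k x y h
      rwa [Swap, mul_add, add_right_comm]
    obtain ⟨hs, hk⟩ := hf.narrow (hshift h) (hshift h')
    exact ⟨hs, by omega⟩
  no_chain s l hl := by
    refine hf.no_chain (s + 14 * m) l (hl.imp fun x y h => ?_)
    rwa [Link, add_right_comm] at h

theorem exists_swap [Fintype ι] (hι : 9 < Fintype.card ι) (hf : Sweep f) :
    ∃ k x y, Swap f (14 * k) x y := by
  by_contra! hno
  have hlink : ∀ {x y}, f 0 x < f 0 y → Link f 0 x y ∨ Link f 14 y x := by
    intro x y h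
    refine (hf.lt_or_lt 15 (ne_of_apply_ne _ h.ne)).imp (fun h₁₅ => ⟨h, h₁₅⟩) fun h₁₅ => ⟨?_, ?_⟩
    · exact hf.lt_of_lt_succ h₁₅ (hno 1 x y)
    · exact hf.lt_succ (hf.lt_half_turn.2 h) (hno 2 y x)
  obtain ⟨s, l, hl, hlen⟩ := exists_isChain_of_pow_lt_card
    (fun b : Bool => Link f (cond b 14 0)) (n := 3) (by simpa using hι) fun x y hxy => by
      rw [Bool.exists_bool]
      rcases hf.lt_or_lt 0 hxy with h | h
      · exact (hlink h).imp .inl .inr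
      · exact (hlink h).imp .inr .inl
  exact hlen.not_ge (hf.no_chain _ l hl)

theorem five_le_and_le_three {f : ℕ → Fin 10 → ℝ} (hf : Sweep f) (h₀ : StrictMono (f 0))
    {i j : Fin 10} (h : Swap f 0 i j) : 5 ≤ (i : ℕ) ∧ (i : ℕ) ≤ 3 := by
  refine ⟨BitMatrix.five_le_of_swap hf h₀ h, ?_⟩
  have hrev : StrictMono fun i : Fin 10 => f 28 i.rev := fun a b hab =>
    hf.lt_half_turn.2 (h₀ (Fin.rev_lt_rev.2 hab))
  have hswap : Swap (fun s => f (s + 14 * 2) ∘ Fin.rev) 0 j.rev i.rev := by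
    simpa [Swap, hf.half_turn] using h
  have := BitMatrix.five_le_of_swap ((hf.shift 2).comp Fin.rev_injective) hrev hswap
  have := hf.val_add_one_eq_of_swap h₀ h
  rw [Fin.val_rev] at *
  omega

end Sweep

theorem not_sweep_of_card_eq_ten {ι : Type*} [Fintype ι] (hι : Fintype.card ι = 10)
    (f : ℕ → ι → ℝ) : ¬ Sweep f := by
  intro hf
  obtain ⟨k, x, y, hswap⟩ := hf.exists_swap (by omega)
  obtain ⟨σ, hσ⟩ := exists_strictMono_comp_equiv hι (hf.injective (14 * k))
  have hswap : Swap (fun s => f (s + 14 * k) ∘ σ) 0 (σ.symm x) (σ.symm y) := by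
    simpa [Swap, add_comm] using hswap
  have := ((hf.shift k).comp σ.injective).five_le_and_le_three (by simpa using hσ) hswap
  omega

/-! ### Heights in a rotating direction -/

section Height

variable {a b c t w : ℝ} {u v : EuclideanSpace ℝ (Fin 2)}

/-- The signed distance of `v` from the line through the origin that makes the angle `t` with
the horizontal axis. -/
noncomputable def height (t : ℝ) (v : EuclideanSpace ℝ (Fin 2)) : ℝ :=
  cos t * v 1 - sin t * v 0

theorem height_sub (t : ℝ) (u v : EuclideanSpace ℝ (Fin 2)) :
    height t (u - v) = height t u - height t v := by
  simp only [height, PiLp.sub_apply]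
  ring

theorem height_neg (t : ℝ) (v : EuclideanSpace ℝ (Fin 2)) : height t (-v) = -height t v := by
  simp only [height, PiLp.neg_apply]
  ring

theorem height_add_pi (t : ℝ) (v : EuclideanSpace ℝ (Fin 2)) : height (t + π) v = -height t v := by
  simp only [height, cos_add_pi, sin_add_pi]
  ring

theorem inner_eq_height_mul_height (t : ℝ) (u v : EuclideanSpace ℝ (Fin 2)) :
    inner ℝ u v = height t u * height t v + height (t + π / 2) u * height (t + π / 2) v := by
  simp only [PiLp.inner_apply, Fin.sum_univ_two, height, RCLike.inner_apply, conj_trivial,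
    cos_add_pi_div_two, sin_add_pi_div_two]
  linear_combination (-(u 0 * v 0 + u 1 * v 1)) * sin_sq_add_cos_sq t

theorem exists_height_add_eq_norm_mul_sin (t : ℝ) (v : EuclideanSpace ℝ (Fin 2)) :
    ∃ β ∈ Set.Ioc (-π) π, ∀ a, height (t + a) v = ‖v‖ * sin (β - a) := by
  set z : ℂ := ⟨-height (t + π / 2) v, height t v⟩ with hz
  have hnorm : ‖z‖ = ‖v‖ := by
    rw [Complex.norm_def, norm_eq_sqrt_real_inner, inner_eq_height_mul_height t,
      Complex.normSq_mk]
    ring_nf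
  refine ⟨z.arg, Complex.arg_mem_Ioc z, fun a => ?_⟩
  rw [sin_sub, mul_sub, ← mul_assoc, ← mul_assoc, ← hnorm, Complex.norm_mul_sin_arg,
    Complex.norm_mul_cos_arg]
  simp only [hz, height, cos_add, sin_add, cos_pi_div_two, sin_pi_div_two]
  ring

theorem exists_height_add_eq_norm_mul_sin_of_pos (h : 0 < height t v) :
    ∃ β ∈ Set.Ioo 0 π, 0 < ‖v‖ ∧ ∀ a, height (t + a) v = ‖v‖ * sin (β - a) := by
  obtain ⟨β, ⟨hβ, hβ'⟩, hsin⟩ := exists_height_add_eq_norm_mul_sin t v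
  have hpos : 0 < ‖v‖ * sin β := by rwa [← sub_zero β, ← hsin, add_zero]
  have hs : 0 < sin β := pos_of_mul_pos_right hpos (norm_nonneg v)
  refine ⟨β, ⟨?_, hβ'.lt_of_ne ?_⟩, pos_of_mul_pos_left hpos hs.le, hsin⟩
  · by_contra! hneg
    exact hs.not_ge (sin_nonpos_of_nonpos_of_neg_pi_le hneg hβ.le)
  · rintro rfl
    simp at hs

theorem height_neg_of_pos_of_neg (hab : a ≤ b) (hbc : b ≤ c) (hca : c ≤ a + π)
    (ha : 0 < height a v) (hb : height b v < 0) : height c v < 0 := by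
  obtain ⟨β, ⟨hβ, hβ'⟩, hv, hsin⟩ := exists_height_add_eq_norm_mul_sin_of_pos ha
  rw [← add_sub_cancel a b, hsin] at hb
  rw [← add_sub_cancel a c, hsin]
  have hβb : β < b - a := by
    by_contra! hle
    exact hb.not_ge (mul_nonneg hv.le (sin_nonneg_of_nonneg_of_le_pi (by linarith) (by linarith)))
  exact mul_neg_of_pos_of_neg hv (sin_neg_of_neg_of_neg_pi_lt (by linarith) (by linarith))

theorem lt_of_sin_sub_pos {β : ℝ} (hβ : 0 < β) (ha : a < π) (h : 0 < sin (β - a)) : a < β := by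
  by_contra! hle
  exact h.not_ge (sin_nonpos_of_nonpos_of_neg_pi_le (by linarith) (by linarith))

theorem angle_lt_of_height_pos (hab : a ≤ b) (hba : b < a + π)
    (hu : 0 < height a u) (hu' : 0 < height b u) (hv : 0 < height a v) (hv' : 0 < height b v) :
    InnerProductGeometry.angle u v < π - (b - a) := by
  obtain ⟨β, ⟨hβ, hβ'⟩, hun, hsinu⟩ := exists_height_add_eq_norm_mul_sin_of_pos hu
  obtain ⟨γ, ⟨hγ, hγ'⟩, hvn, hsinv⟩ := exists_height_add_eq_norm_mul_sin_of_pos hv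
  rw [← add_sub_cancel a b, hsinu] at hu'
  rw [← add_sub_cancel a b, hsinv] at hv'
  have hbβ := lt_of_sin_sub_pos hβ (by linarith) (pos_of_mul_pos_right hu' hun.le)
  have hbγ := lt_of_sin_sub_pos hγ (by linarith) (pos_of_mul_pos_right hv' hvn.le)
  have hinner : inner ℝ u v = ‖u‖ * ‖v‖ * cos (β - γ) := by
    rw [inner_eq_height_mul_height a, hsinu, hsinv, ← add_zero a, hsinu, hsinv, cos_sub,
      sin_sub_pi_div_two, sin_sub_pi_div_two, sub_zero, sub_zero]
    ring
  have habs : |β - γ| < π - (b - a) := abs_lt.2 ⟨by linarith, by linarith⟩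
  rwa [InnerProductGeometry.angle, hinner, mul_div_cancel_left₀ _ (by positivity), ← cos_abs,
    arccos_cos (abs_nonneg _) (by linarith)]

theorem le_abs_angle_sub_pi_div_two (hab : a + (π / 2 + w) ≤ b) (hba : b < a + π) (hw : 0 ≤ w)
    (hu : 0 < height a u * height b u) (hv : 0 < height a v * height b v) :
    w ≤ |InnerProductGeometry.angle u v - π / 2| := by
  have hle : a ≤ b := by linarith [pi_pos]
  have hneg : ∀ {v}, height a v < 0 ∧ height b v < 0 → 0 < height a (-v) ∧ 0 < height b (-v) := by
    simp [height_neg]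
  rw [le_abs]
  rcases pos_and_pos_or_neg_and_neg_of_mul_pos hu with hu | hu <;>
    rcases pos_and_pos_or_neg_and_neg_of_mul_pos hv with hv | hv
  · have := angle_lt_of_height_pos hle hba hu.1 hu.2 hv.1 hv.2
    exact .inr (by linarith)
  · have := angle_lt_of_height_pos hle hba hu.1 hu.2 (hneg hv).1 (hneg hv).2
    rw [InnerProductGeometry.angle_neg_right] at this
    exact .inl (by linarith)
  · have := angle_lt_of_height_pos hle hba (hneg hu).1 (hneg hu).2 hv.1 hv.2
    rw [InnerProductGeometry.angle_neg_left] at this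
    exact .inl (by linarith)
  · have := angle_lt_of_height_pos hle hba (hneg hu).1 (hneg hu).2 (hneg hv).1 (hneg hv).2
    rw [InnerProductGeometry.angle_neg_neg] at this
    exact .inr (by linarith)

theorem exists_int_mul_pi_mem_Ioo (hab : a ≤ b) (h : sin a * sin b < 0) :
    ∃ n : ℤ, n * π ∈ Set.Ioo a b := by
  have hzero : (0 : ℝ) ∈ Set.uIcc (sin a) (sin b) := by
    rw [Set.mem_uIcc]
    rcases mul_neg_iff.1 h with h | h
    · exact .inr ⟨h.2.le, h.1.le⟩
    · exact .inl ⟨h.1.le, h.2.le⟩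
  obtain ⟨c, hc, hsin⟩ := intermediate_value_uIcc continuousOn_sin hzero
  rw [Set.uIcc_of_le hab] at hc
  obtain ⟨n, rfl⟩ := sin_eq_zero_iff.1 hsin
  refine ⟨n, hc.1.lt_of_ne ?_, hc.2.lt_of_ne ?_⟩ <;> rintro rfl <;> simp [hsin] at h

end Height

section LineAngle

variable {ι : Type*} {Q : ι → EuclideanSpace ℝ (Fin 2)} {α : Sym2 ι → ℝ}

/-- `α s(x, y)` is, up to multiples of `π`, the angle which the line through `Q x` and `Q y` makes
with the horizontal axis. Heights enter in pairs so that the formula is symmetric in `x` and `y`. -/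
def IsLineAngle (Q : ι → EuclideanSpace ℝ (Fin 2)) (α : Sym2 ι → ℝ) : Prop :=
  ∀ x y t u, height t (Q y - Q x) * height u (Q y - Q x) =
    ‖Q y - Q x‖ ^ 2 * (sin (α s(x, y) - t) * sin (α s(x, y) - u))

theorem exists_isLineAngle (Q : ι → EuclideanSpace ℝ (Fin 2)) : ∃ α, IsLineAngle Q α := by
  have hex : ∀ z : Sym2 ι, ∃ β, ∀ x y t u, z = s(x, y) →
      height t (Q y - Q x) * height u (Q y - Q x) =
        ‖Q y - Q x‖ ^ 2 * (sin (β - t) * sin (β - u)) := by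
    refine Sym2.ind fun x y => ?_
    obtain ⟨β, -, hβ⟩ := exists_height_add_eq_norm_mul_sin 0 (Q y - Q x)
    simp only [zero_add] at hβ
    have hxy : ∀ t u, height t (Q y - Q x) * height u (Q y - Q x) =
        ‖Q y - Q x‖ ^ 2 * (sin (β - t) * sin (β - u)) := fun t u => by
      rw [hβ, hβ]
      ring
    refine ⟨β, fun x' y' t u h => ?_⟩
    obtain ⟨rfl, rfl⟩ | ⟨rfl, rfl⟩ := Sym2.eq_iff.1 h
    · exact hxy t u
    · rw [← neg_sub (Q y), height_neg, height_neg, neg_mul_neg, norm_neg, hxy]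
  choose α hα using hex
  exact ⟨α, fun x y t u => hα _ x y t u rfl⟩

namespace IsLineAngle

theorem exists_eq_of_height_eq (hα : IsLineAngle Q α) (hQ : Function.Injective Q) {x y : ι}
    (hxy : x ≠ y) {t : ℝ} (h : height t (Q x) = height t (Q y)) :
    ∃ n : ℤ, α s(x, y) - t = n * π := by
  have hzero := hα x y t t
  rw [height_sub, h, sub_self, zero_mul, eq_comm, mul_eq_zero, mul_self_eq_zero] at hzero
  have hne : ‖Q y - Q x‖ ^ 2 ≠ 0 :=
    pow_ne_zero _ (norm_ne_zero_iff.2 (sub_ne_zero.2 (hQ.ne hxy.symm)))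
  exact (sin_eq_zero_iff.1 (hzero.resolve_left hne)).imp fun n => Eq.symm

theorem exists_mem_Ioo_of_height_lt (hα : IsLineAngle Q α) {x y : ι} {t u : ℝ} (htu : t ≤ u)
    (ht : height t (Q x) < height t (Q y)) (hu : height u (Q y) < height u (Q x)) :
    ∃ n : ℤ, α s(x, y) - n * π ∈ Set.Ioo t u := by
  have hneg : height u (Q y - Q x) * height t (Q y - Q x) < 0 := by
    rw [height_sub, height_sub]
    exact mul_neg_of_neg_of_pos (sub_neg.2 hu) (sub_pos.2 ht)
  rw [hα] at hneg
  obtain ⟨n, hn⟩ := exists_int_mul_pi_mem_Ioo (by linarith)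
    (neg_of_mul_neg_right hneg (sq_nonneg _))
  exact ⟨n, by linarith [hn.2], by linarith [hn.1]⟩

end IsLineAngle

end LineAngle

/-! ### Sparse arcs -/

section SparseArc

open MeasureTheory

variable {ι : Type*} [Fintype ι]

theorem exists_notMem_forall_mem_eq_of_sum_measure_lt {X : Type*} [MeasurableSpace X]
    {μ : Measure X} {B : ι → Set X} (hB : ∀ i, MeasurableSet (B i))
    (h : ∑ i, μ (B i) < 2 * μ Set.univ) {N : Set X} (hN : μ N = 0) :
    ∃ x ∉ N, ∀ i j, x ∈ B i → x ∈ B j → i = j := by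
  classical
  by_contra! hno
  have htwo : ∀ x ∉ N, (2 : ENNReal) ≤ ∑ i, (B i).indicator 1 x := by
    intro x hx
    obtain ⟨i, j, hi, hj, hij⟩ := hno x hx
    calc (2 : ENNReal) = ∑ k ∈ {i, j}, (B k).indicator 1 x := by
          rw [Finset.sum_pair hij, Set.indicator_of_mem hi, Set.indicator_of_mem hj, Pi.one_apply,
            one_add_one_eq_two]
      _ ≤ _ := Finset.sum_le_sum_of_subset (Finset.subset_univ _)
  refine h.not_ge ?_
  calc 2 * μ Set.univ = ∫⁻ _, 2 ∂μ := (lintegral_const _).symm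
    _ ≤ ∫⁻ x, ∑ i, (B i).indicator 1 x ∂μ := by
        refine lintegral_mono_ae ?_
        filter_upwards [measure_eq_zero_iff_ae_notMem.1 hN] using htwo
    _ = ∑ i, μ (B i) := by
        rw [lintegral_finsetSum _ fun i _ => measurable_one.indicator (hB i)]
        simp only [lintegral_indicator_one (hB _)]

instance nullSingletonClass_volume_addCircle (p : ℝ) [Fact (0 < p)] :
    NullSingletonClass (volume : Measure (AddCircle p)) where
  measure_singleton x := by
    rw [← Metric.closedBall_zero, AddCircle.volume_closedBall, mul_zero, ENNReal.ofReal_eq_zero]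
    exact min_le_right _ _

theorem exists_notMem_forall_mem_closedBall_eq {p : ℝ} [Fact (0 < p)] (c : ι → AddCircle p) {w : ℝ}
    (hw : Fintype.card ι * w < 2 * p) {N : Set (AddCircle p)} (hN : N.Countable) :
    ∃ x ∉ N, ∀ i j, x ∈ Metric.closedBall (c i) (w / 2) → x ∈ Metric.closedBall (c j) (w / 2) →
      i = j := by
  have hp : 0 < p := Fact.out
  refine exists_notMem_forall_mem_eq_of_sum_measure_lt (μ := volume)
    (fun _ => Metric.isClosed_closedBall.measurableSet) ?_ (hN.measure_zero _)
  calc ∑ i, volume (Metric.closedBall (c i) (w / 2))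
      ≤ ∑ _ : ι, ENNReal.ofReal w := Finset.sum_le_sum fun i _ => by
        rw [AddCircle.volume_closedBall, mul_div_cancel₀ _ two_ne_zero]
        exact ENNReal.ofReal_le_ofReal (min_le_right _ _)
    _ = ENNReal.ofReal (Fintype.card ι * w) := by
        rw [Finset.sum_const, nsmul_eq_mul, ENNReal.ofReal_mul (Nat.cast_nonneg _),
          ENNReal.ofReal_natCast, Finset.card_univ]
    _ < ENNReal.ofReal (2 * p) := (ENNReal.ofReal_lt_ofReal_iff (by positivity)).2 hw
    _ = 2 * volume (Set.univ : Set (AddCircle p)) := by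
        rw [AddCircle.measure_univ, ENNReal.ofReal_mul zero_le_two, ENNReal.ofReal_ofNat]

theorem exists_notMem_forall_add_mul_mem_Ioo_eq {p : ℝ} (hp : 0 < p) (α : ι → ℝ) {w : ℝ}
    (hw : Fintype.card ι * w < 2 * p) {N : Set ℝ} (hN : N.Countable) :
    ∃ t ∉ N, ∀ i j, ∀ n m : ℤ, α i + n * p ∈ Set.Ioo t (t + w) → α j + m * p ∈ Set.Ioo t (t + w) →
      i = j := by
  have : Fact (0 < p) := ⟨hp⟩
  obtain ⟨x, hxN, hx⟩ := exists_notMem_forall_mem_closedBall_eq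
    (fun i => ((α i - w / 2 : ℝ) : AddCircle p)) hw (hN.image ((↑) : ℝ → AddCircle p))
  obtain ⟨t, rfl⟩ := QuotientAddGroup.mk_surjective x
  have hball : ∀ i, ∀ n : ℤ, α i + n * p ∈ Set.Ioo t (t + w) →
      (t : AddCircle p) ∈ Metric.closedBall ((α i - w / 2 : ℝ) : AddCircle p) (w / 2) := by
    intro i n hn
    have hcenter : ((α i - w / 2 : ℝ) : AddCircle p) =
        ((α i + n * p - w / 2 : ℝ) : AddCircle p) := by
      rw [add_sub_right_comm, AddCircle.coe_add, ← zsmul_eq_mul, AddCircle.coe_zsmul,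
        AddCircle.coe_period, smul_zero, add_zero]
    rw [hcenter, Metric.mem_closedBall, dist_eq_norm, ← AddCircle.coe_sub]
    refine QuotientAddGroup.norm_mk_le_norm.trans ?_
    rw [Real.norm_eq_abs, abs_le]
    constructor <;> linarith [hn.1, hn.2]
  exact ⟨t, fun ht => hxN (Set.mem_image_of_mem _ ht), fun i j n m hn hm =>
    hx i j (hball i n hn) (hball j m hm)⟩

end SparseArc

/-! ### The sweep of a point set -/

section Offset

variable {w : ℝ}

/-- The angles of the directions used: every quarter turn is cut into a cell of width `w` and
thirteen further cells of equal width. -/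
noncomputable def offset (w : ℝ) (s : ℕ) : ℝ :=
  ∑ i ∈ Finset.range s, if 14 ∣ i then w else (π / 2 - w) / 13

theorem offset_succ (w : ℝ) (s : ℕ) :
    offset w (s + 1) = offset w s + if 14 ∣ s then w else (π / 2 - w) / 13 :=
  Finset.sum_range_succ _ s

theorem offset_add_fourteen (w : ℝ) (s : ℕ) : offset w (s + 14) = offset w s + π / 2 := by
  induction s with
  | zero =>
    norm_num [offset, Finset.sum_range_succ]
    ring
  | succ s ih =>
    rw [show s + 1 + 14 = s + 14 + 1 from rfl, offset_succ, ih, offset_succ]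
    simp only [Nat.dvd_add_self_right]
    ring

theorem offset_add_twentyeight (w : ℝ) (s : ℕ) : offset w (s + 28) = offset w s + π := by
  rw [show s + 28 = s + 14 + 14 from rfl, offset_add_fourteen, offset_add_fourteen, add_assoc,
    add_halves]

theorem offset_fourteen_mul (w : ℝ) (k : ℕ) : offset w (14 * k) = k * (π / 2) := by
  induction k with
  | zero => simp [offset]
  | succ k ih =>
    rw [mul_add, mul_one, offset_add_fourteen, ih]
    push_cast
    ring

theorem offset_fourteen_mul_add_one (w : ℝ) (k : ℕ) :
    offset w (14 * k + 1) = k * (π / 2) + w := by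
  rw [offset_succ, if_pos (Nat.dvd_mul_right 14 k), offset_fourteen_mul]

theorem offset_add_le_succ (hw : 14 * w ≤ π / 2) (s : ℕ) : offset w s + w ≤ offset w (s + 1) := by
  rw [offset_succ]
  split_ifs <;> linarith

theorem offset_strictMono (hw₀ : 0 < w) (hw : 14 * w ≤ π / 2) : StrictMono (offset w) :=
  strictMono_nat_of_lt_succ fun s => by linarith [offset_add_le_succ hw s]

end Offset

section Heights

variable {ι : Type*} {Q : ι → EuclideanSpace ℝ (Fin 2)} {α : Sym2 ι → ℝ} {w t : ℝ}

/-- The heights of the points `Q x` in the directions `t + offset w s`. -/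
noncomputable def heights (Q : ι → EuclideanSpace ℝ (Fin 2)) (w t : ℝ) (s : ℕ) (x : ι) : ℝ :=
  height (t + offset w s) (Q x)

theorem heights_injective (hQ : Function.Injective Q) (hα : IsLineAngle Q α)
    (ht : ∀ z s (n : ℤ), α z - offset w s - n * π ≠ t) (s : ℕ) :
    Function.Injective (heights Q w t s) := by
  intro x y h
  by_contra hxy
  obtain ⟨n, hn⟩ := hα.exists_eq_of_height_eq hQ hxy h
  exact ht s(x, y) s n (by linarith)

theorem heights_add_twentyeight (s : ℕ) (x : ι) :
    heights Q w t (s + 28) x = -heights Q w t s x := by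
  rw [heights, offset_add_twentyeight, ← add_assoc, height_add_pi, heights]

theorem heights_lt_of_lt_of_lt (hw : Monotone (offset w)) {s k l : ℕ} {x y : ι} (hsk : s ≤ k)
    (hkl : k ≤ l) (hls : l ≤ s + 28) (hs : heights Q w t s x < heights Q w t s y)
    (hk : heights Q w t k y < heights Q w t k x) : heights Q w t l y < heights Q w t l x := by
  have hsub : ∀ m, height (t + offset w m) (Q y - Q x) = heights Q w t m y - heights Q w t m x :=
    fun m => height_sub _ _ _
  have hle := hw hls
  rw [offset_add_twentyeight] at hle
  rw [← sub_neg, ← hsub] at hk ⊢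
  rw [← sub_pos, ← hsub] at hs
  exact height_neg_of_pos_of_neg (by linarith [hw hsk]) (by linarith [hw hkl]) (by linarith) hs hk

theorem Swap.exists_mem_Ioo (hα : IsLineAngle Q α) (hw : 0 ≤ w) {k : ℕ} {x y : ι}
    (h : Swap (heights Q w t) (14 * k) x y) :
    ∃ n : ℤ, α s(x, y) + (2 * n - k : ℤ) * (π / 2) ∈ Set.Ioo t (t + w) := by
  rw [Swap, heights, heights, heights, heights, offset_fourteen_mul,
    offset_fourteen_mul_add_one] at h
  obtain ⟨n, hn⟩ := hα.exists_mem_Ioo_of_height_lt (by linarith) h.1 h.2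
  refine ⟨-n, ?_, ?_⟩ <;> push_cast <;> linarith [hn.1, hn.2]

theorem int_eq_of_mem_Ioo {p : ℝ} (hwp : w ≤ p) {a : ℝ} {n m : ℤ}
    (hn : a + n * p ∈ Set.Ioo t (t + w)) (hm : a + m * p ∈ Set.Ioo t (t + w)) : n = m := by
  have hp : 0 < p := by linarith [hn.1, hn.2]
  have hlt : |((n - m : ℤ) : ℝ)| * p < 1 * p := by
    rw [← abs_of_pos hp, ← abs_mul, abs_of_pos hp, abs_lt]
    push_cast
    constructor <;> linarith [hn.1, hn.2, hm.1, hm.2]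
  have := lt_of_mul_lt_mul_right hlt hp.le
  rw [← Int.cast_abs, ← Int.cast_one, Int.cast_lt, Int.abs_lt_one_iff] at this
  exact sub_eq_zero.1 this

theorem heights_narrow (hα : IsLineAngle Q α) (hw₀ : 0 ≤ w) (hw : w ≤ π / 2)
    (ht : ∀ z z' : {z : Sym2 ι // ¬ z.IsDiag}, ∀ n m : ℤ, α z + n * (π / 2) ∈ Set.Ioo t (t + w) →
      α z' + m * (π / 2) ∈ Set.Ioo t (t + w) → z = z')
    {k l : ℕ} {x y x' y' : ι} (h : Swap (heights Q w t) (14 * k) x y)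
    (h' : Swap (heights Q w t) (14 * l) x' y') : s(x, y) = s(x', y') ∧ k % 2 = l % 2 := by
  have hne : ∀ {m x y}, Swap (heights Q w t) m x y → ¬ s(x, y).IsDiag := fun h hxy =>
    h.1.ne (congrArg _ (Sym2.mk_isDiag_iff.1 hxy))
  obtain ⟨n, hn⟩ := h.exists_mem_Ioo hα hw₀
  obtain ⟨m, hm⟩ := h'.exists_mem_Ioo hα hw₀
  have hz : s(x, y) = s(x', y') := congrArg Subtype.val (ht ⟨_, hne h⟩ ⟨_, hne h'⟩ _ _ hn hm)
  rw [← hz] at hm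
  have := int_eq_of_mem_Ioo hw hn hm
  exact ⟨hz, by omega⟩

theorem le_abs_angle_sub_of_link (hw₀ : 0 < w) (hw : 14 * w ≤ π / 2) {s : ℕ} {x y z : ι}
    (hxy : Link (heights Q w t) s x y ∨ Link (heights Q w t) s y x)
    (hzy : Link (heights Q w t) s z y ∨ Link (heights Q w t) s y z) :
    w ≤ |∠ (Q x) (Q y) (Q z) - π / 2| := by
  have hpos : ∀ {x y}, Link (heights Q w t) s x y ∨ Link (heights Q w t) s y x →
      0 < height (t + offset w s) (Q x - Q y) * height (t + offset w (s + 15)) (Q x - Q y) := by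
    intro x y h
    rw [height_sub, height_sub]
    rcases h with h | h
    · exact mul_pos_of_neg_of_neg (sub_neg.2 h.1) (sub_neg.2 h.2)
    · exact mul_pos (sub_pos.2 h.1) (sub_pos.2 h.2)
  refine le_abs_angle_sub_pi_div_two ?_ ?_ hw₀.le (hpos hxy) (hpos hzy)
  · linarith [offset_add_fourteen w s, offset_add_le_succ hw (s + 14)]
  · linarith [offset_strictMono hw₀ hw (show s + 15 < s + 28 by omega), offset_add_twentyeight w s]

theorem heights_no_chain (hw₀ : 0 < w) (hw : 14 * w ≤ π / 2)
    (hangle : ∀ T : Finset ι, T.card = 4 → ∃ x ∈ T, ∃ y ∈ T, ∃ z ∈ T, x ≠ y ∧ y ≠ z ∧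
      |∠ (Q x) (Q y) (Q z) - π / 2| < w)
    (s : ℕ) (l : List ι) (hl : l.IsChain (Link (heights Q w t) s)) : l.length ≤ 3 := by
  by_contra! hlen
  obtain ⟨T, hT, hlink⟩ := exists_finset_of_isChain (hl.take 4)
  obtain ⟨x, hx, y, hy, z, hz, hxy, hyz, hlt⟩ :=
    hangle T (hT.trans (List.length_take_of_le hlen))
  exact hlt.not_ge
    (le_abs_angle_sub_of_link hw₀ hw (hlink x hx y hy hxy) (hlink z hz y hy hyz.symm))

theorem exists_sweep [Fintype ι] (hQ : Function.Injective Q) (hw₀ : 0 < w) (hw : 14 * w ≤ π / 2)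
    (hcard : (Fintype.card ι).choose 2 * w < π)
    (hangle : ∀ T : Finset ι, T.card = 4 → ∃ x ∈ T, ∃ y ∈ T, ∃ z ∈ T, x ≠ y ∧ y ≠ z ∧
      |∠ (Q x) (Q y) (Q z) - π / 2| < w) : ∃ f : ℕ → ι → ℝ, Sweep f := by
  classical
  obtain ⟨α, hα⟩ := exists_isLineAngle Q
  obtain ⟨t, htN, ht⟩ := exists_notMem_forall_add_mul_mem_Ioo_eq pi_div_two_pos
    (fun z : {z : Sym2 ι // ¬ z.IsDiag} => α z) (w := w)
    (by rwa [Sym2.card_subtype_not_diag, mul_div_cancel₀ _ two_ne_zero])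
    (Set.countable_range fun p : Sym2 ι × ℕ × ℤ => α p.1 - offset w p.2.1 - p.2.2 * π)
  exact ⟨heights Q w t,
    { injective := heights_injective hQ hα fun z s n h => htN ⟨(z, s, n), h⟩
      half_turn := heights_add_twentyeight
      swap_once := heights_lt_of_lt_of_lt (offset_strictMono hw₀ hw).monotone
      narrow := heights_narrow hα hw₀.le (by linarith) ht
      no_chain := heights_no_chain hw₀ hw hangle }⟩

theorem exists_forall_angle_of_card_eq_ten [Fintype ι] (hι : Fintype.card ι = 10)
    (hQ : Function.Injective Q) (hw₀ : 0 < w) (hw : 45 * w < π) :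
    ∃ T : Finset ι, T.card = 4 ∧ ∀ x ∈ T, ∀ y ∈ T, ∀ z ∈ T, x ≠ y → y ≠ z →
      w ≤ |∠ (Q x) (Q y) (Q z) - π / 2| := by
  by_contra! hangle
  obtain ⟨f, hf⟩ := exists_sweep hQ hw₀ (by linarith)
    (by rwa [hι, show Nat.choose 10 2 = 45 from rfl, Nat.cast_ofNat]) hangle
  exact not_sweep_of_card_eq_ten hι f hf

end Heights

theorem exists_mem_Ioo_forall_le_imp_le {ι R : Type*} [Finite ι] [LinearOrder R]
    [DenselyOrdered R] {c a : R} (hca : c < a) (g : ι → R) :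
    ∃ b ∈ Set.Ioo c a, ∀ i, b ≤ g i → a ≤ g i := by
  classical
  have : Fintype ι := .ofFinite ι
  obtain ⟨b, hb, hba⟩ : ∃ b, (∀ r ∈ insert c (({i | g i < a} : Finset ι).image g), r < b) ∧
      ∀ r ∈ ({a} : Finset R), b < r :=
    Finset.exists_between (Finset.insert_nonempty _ _) (Finset.singleton_nonempty a) (by simpa)
  refine ⟨b, ⟨hb c (Finset.mem_insert_self _ _), hba a (Finset.mem_singleton_self a)⟩, ?_⟩
  intro i hi
  by_contra! hlt
  refine (hb (g i) (Finset.mem_insert_of_mem (Finset.mem_image_of_mem g ?_))).not_ge hi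
  simpa using hlt

/-- **Proposition 2.1 (Γ₄(10) ≥ 4°).** Every set of 10 distinct points in the plane has a
4-element subset all of whose angles deviate from a right angle by at least 4°. -/
theorem gamma_four_ten_ge_four_degrees
    (S : Finset (EuclideanSpace ℝ (Fin 2))) (hS : S.card = 10) :
    ∃ T ⊆ S, T.card = 4 ∧
      ∀ A ∈ T, ∀ B ∈ T, ∀ C ∈ T, A ≠ B → B ≠ C → A ≠ C →
        |∠ A B C - π / 2| ≥ 4 * (π / 180) := by
  obtain ⟨w, ⟨hw₀, hw⟩, hle⟩ := exists_mem_Ioo_forall_le_imp_le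
    (show 0 < 4 * (π / 180) by positivity)
    fun p : S × S × S => |∠ (p.1 : EuclideanSpace ℝ (Fin 2)) p.2.1 p.2.2 - π / 2|
  obtain ⟨T, hT, hangle⟩ := exists_forall_angle_of_card_eq_ten ((Fintype.card_coe S).trans hS)
    Subtype.val_injective hw₀ (by linarith)
  refine ⟨T.map (.subtype _), Finset.map_subtype_subset T, by rw [Finset.card_map, hT], ?_⟩
  intro A hA B hB C hC hAB hBC _
  obtain ⟨x, hx, rfl⟩ := Finset.mem_map.1 hA
  obtain ⟨y, hy, rfl⟩ := Finset.mem_map.1 hB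
  obtain ⟨z, hz, rfl⟩ := Finset.mem_map.1 hC
  exact hle (x, y, z) (hangle x hx y hy z hz (ne_of_apply_ne _ hAB) (ne_of_apply_ne _ hBC))
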